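/- arXiv:1402.0067 — 7 statements merged into one kernel-verified Lean document; each statement's English description precedes it below -/
import Mathlib

section
/- Let κ be an infinite cardinal and let G=(V,E) be a graph in which every vertex has infinite degree. Suppose that every induced subgraph H=(W,F) of G with |W| ≤ κ has an unfriendly partition whenever each element of W has at least κ neighbours in W, or strictly more neighbours in W than in V−W. Then G has a κ-unfriendly partition. -/
open Cardinal

universe u

/-- `π` is an unfriendly partition of `G`: for each vertex `x`, the number of neighbours of `x`
in the opposite class is at least the number of neighbours in the same class. -/
def UnfriendlyPartition {V : Type u} (G : SimpleGraph V) (π : V → Fin 2) : Prop :=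
  ∀ x : V, #{y : V // G.Adj x y ∧ π y = π x} ≤ #{y : V // G.Adj x y ∧ π y ≠ π x}

/-- `π` is a `κ`-unfriendly partition of `G`: for each vertex `x`, the number of neighbours of `x`
in the opposite class is `≥ κ`, or at least the number of neighbours in the same class. -/
def KUnfriendlyPartition {V : Type u} (G : SimpleGraph V) (κ : Cardinal.{u}) (π : V → Fin 2) :
    Prop :=
  ∀ x : V, κ ≤ #{y : V // G.Adj x y ∧ π y ≠ π x} ∨
    #{y : V // G.Adj x y ∧ π y = π x} ≤ #{y : V // G.Adj x y ∧ π y ≠ π x}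

/-- The union of the iterates of a set operation starting from a point. -/
theorem exists_closed_set {V : Type u} (κ : Cardinal.{u}) (hκ : ℵ₀ ≤ κ) (f : V → Set V)
    (R : Set V) (x0 : V) (hx0 : x0 ∈ R) (hf : ∀ x ∈ R, f x ⊆ R) (hc : ∀ x, #↥(f x) ≤ κ) :
    ∃ W : Set V, x0 ∈ W ∧ W ⊆ R ∧ #W ≤ κ ∧ ∀ x ∈ W, f x ⊆ W := by
  let A : ℕ → Set V := fun n => Nat.rec {x0} (fun _ B => ⋃ x ∈ B, f x) n
  have hA0 : A 0 = {x0} := rfl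
  have hAs : ∀ n, A (n+1) = ⋃ x ∈ A n, f x := fun n => rfl
  have hAc : ∀ n, #↥(A n) ≤ κ := by
    intro n
    induction n with
    | zero => rw [hA0, mk_singleton]; exact one_le_aleph0.trans hκ
    | succ n ih =>
      rw [hAs]
      refine (mk_biUnion_le f (A n)).trans ?_
      calc #↥(A n) * ⨆ x : A n, #↥(f x.1) ≤ κ * κ :=
            mul_le_mul' ih (ciSup_le' fun x => hc x.1)
        _ = κ := mul_eq_self hκ
  have hAR : ∀ n, A n ⊆ R := by
    intro n
    induction n with
    | zero => rw [hA0]; simpa using hx0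
    | succ n ih =>
      rw [hAs]
      exact Set.iUnion₂_subset fun x hx => hf x (ih hx)
  refine ⟨⋃ n : ULift.{u} ℕ, A n.down, ?_, ?_, ?_, ?_⟩
  · exact Set.mem_iUnion.2 ⟨⟨0⟩, by simp [hA0]⟩
  · exact Set.iUnion_subset fun n => hAR _
  · refine (mk_iUnion_le _).trans ?_
    calc #(ULift.{u} ℕ) * ⨆ n : ULift.{u} ℕ, #↥(A n.down) ≤ κ * κ :=
          mul_le_mul' (by simpa using hκ) (ciSup_le' fun n => hAc _)
      _ = κ := mul_eq_self hκ
  · intro x hx y hy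
    obtain ⟨n, hn⟩ := Set.mem_iUnion.1 hx
    refine Set.mem_iUnion.2 ⟨⟨n.down+1⟩, ?_⟩
    change y ∈ A (n.down + 1)
    rw [hAs]
    exact Set.mem_iUnion₂.2 ⟨x, hn, hy⟩

/-- A partial colouring (as a functional relation) all of whose coloured vertices already have
enough coloured neighbours of the opposite colour. -/
def GoodPartial {V : Type u} (G : SimpleGraph V) (m : V → Cardinal.{u})
    (S : Set (V × Fin 2)) : Prop :=
  (∀ x c c', (x, c) ∈ S → (x, c') ∈ S → c = c') ∧
  ∀ x c, (x, c) ∈ S → m x ≤ #{y : V | G.Adj x y ∧ ∃ c', c' ≠ c ∧ (y, c') ∈ S}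

theorem exists_maximal_good {V : Type u} (G : SimpleGraph V) (m : V → Cardinal.{u}) :
    ∃ S, Maximal (fun S => S ∈ {S | GoodPartial G m S}) S := by
  refine zorn_subset _ ?_
  intro C hC hch
  refine ⟨⋃₀ C, ⟨?_, ?_⟩, fun s hs => Set.subset_sUnion_of_mem hs⟩
  · rintro x c c' ⟨s, hs, h1⟩ ⟨t, ht, h2⟩
    rcases hch.total hs ht with h | h
    · exact (hC ht).1 x c c' (h h1) h2
    · exact (hC hs).1 x c c' h1 (h h2)
  · rintro x c ⟨s, hs, h1⟩
    refine ((hC hs).2 x c h1).trans (mk_le_mk_of_subset ?_)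
    rintro y ⟨hy, c', hc, hm⟩
    exact ⟨hy, c', hc, s, hs, hm⟩

theorem stmt0 {V : Type u} (κ : Cardinal.{u}) (hκ : ℵ₀ ≤ κ) (G : SimpleGraph V)
    (hdeg : ∀ x : V, (G.neighborSet x).Infinite)
    (hyp : ∀ W : Set V, #W ≤ κ →
      (∀ x ∈ W, κ ≤ #↥(G.neighborSet x ∩ W) ∨
        #↥(G.neighborSet x ∩ Wᶜ) < #↥(G.neighborSet x ∩ W)) →
      ∃ π : W → Fin 2, UnfriendlyPartition (G.induce W) π) :
    ∃ π : V → Fin 2, KUnfriendlyPartition G κ π := by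
  classical
  let m : V → Cardinal.{u} := fun x => min κ #(G.neighborSet x)
  have hd : ∀ x, ℵ₀ ≤ #(G.neighborSet x) := fun x =>
    infinite_iff.1 (hdeg x).to_subtype
  have hm : ∀ x, ℵ₀ ≤ m x := fun x => le_min hκ (hd x)
  obtain ⟨S, hS⟩ := exists_maximal_good G m
  have hSg : GoodPartial G m S := hS.prop
  let U : Set V := {x | ∃ c, (x, c) ∈ S}
  -- vertices outside the domain have few neighbours in it
  have hA : ∀ x, x ∉ U → #↥(G.neighborSet x ∩ U) < m x := by
    intro x hx
    by_contra hcon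
    have hcon := not_lt.1 hcon
    let B : Fin 2 → Set V := fun c => {y | G.Adj x y ∧ (y, c) ∈ S}
    have hsub : G.neighborSet x ∩ U ⊆ B 0 ∪ B 1 := by
      rintro y ⟨hy, c, hc⟩
      fin_cases c
      · exact Or.inl ⟨hy, hc⟩
      · exact Or.inr ⟨hy, hc⟩
    have hle : m x ≤ #↥(B 0) + #↥(B 1) :=
      hcon.trans ((mk_le_mk_of_subset hsub).trans (mk_union_le _ _))
    have hex : ∃ c, m x ≤ #↥(B c) := by
      by_contra hno
      push Not at hno
      exact absurd hle (not_le.2 (add_lt_of_lt (hm x) (hno 0) (hno 1)))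
    obtain ⟨c, hc⟩ := hex
    obtain ⟨e, he⟩ := exists_ne c
    have hgood : GoodPartial G m (insert (x, e) S) := by
      refine ⟨?_, ?_⟩
      · rintro y a b (h1 | h1) (h2 | h2)
        · rw [Prod.mk.injEq] at h1 h2
          rw [h1.2, h2.2]
        · rw [Prod.mk.injEq] at h1
          exact absurd ⟨b, h1.1 ▸ h2⟩ hx
        · rw [Prod.mk.injEq] at h2
          exact absurd ⟨a, h2.1 ▸ h1⟩ hx
        · exact hSg.1 y a b h1 h2
      · rintro y a (h1 | h1)
        · rw [Prod.mk.injEq] at h1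
          obtain ⟨rfl, rfl⟩ := h1
          refine hc.trans (mk_le_mk_of_subset ?_)
          rintro z ⟨hz, hzc⟩
          exact ⟨hz, c, he.symm, Or.inr hzc⟩
        · refine (hSg.2 y a h1).trans (mk_le_mk_of_subset ?_)
          rintro z ⟨hz, c', h, h'⟩
          exact ⟨hz, c', h, Or.inr h'⟩
    have := hS.le_of_ge hgood (Set.subset_insert _ _)
    exact hx ⟨e, this (Set.mem_insert _ _)⟩
  -- remaining degrees
  have hrem : ∀ x, x ∉ U → m x ≤ #↥(G.neighborSet x ∩ Uᶜ) := by
    intro x hx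
    by_contra hcon
    have hcon := not_le.1 hcon
    have h1 : G.neighborSet x ⊆ (G.neighborSet x ∩ U) ∪ (G.neighborSet x ∩ Uᶜ) := by
      intro y hy
      by_cases h : y ∈ U
      · exact Or.inl ⟨hy, h⟩
      · exact Or.inr ⟨hy, h⟩
    have h2 := (mk_le_mk_of_subset h1).trans (mk_union_le _ _)
    have h3 := add_lt_of_lt (hm x) (hA x hx) hcon
    exact absurd ((min_le_right _ _).trans h2) (not_le.2 h3)
  have hall : ∀ x, x ∈ U := by
    by_contra hne
    push Not at hne
    obtain ⟨x0, hx0⟩ := hne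
    have hf : ∀ x, ∃ F : Set V, #F ≤ κ ∧ (x ∉ U → F ⊆ G.neighborSet x ∩ Uᶜ ∧
        (κ ≤ #F ∨ (#(G.neighborSet x) < κ ∧ F = G.neighborSet x ∩ Uᶜ))) := by
      intro x
      by_cases hx : x ∈ U
      · exact ⟨∅, by simp, fun h => absurd hx h⟩
      · by_cases hk : κ ≤ #(G.neighborSet x)
        · have : κ ≤ #↥(G.neighborSet x ∩ Uᶜ) :=
            (le_min le_rfl hk).trans (hrem x hx)
          obtain ⟨F, hF, hFc⟩ := le_mk_iff_exists_subset.1 this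
          exact ⟨F, hFc.le, fun _ => ⟨hF, Or.inl hFc.ge⟩⟩
        · have hk := not_le.1 hk
          exact ⟨_, (mk_le_mk_of_subset Set.inter_subset_left).trans hk.le,
            fun _ => ⟨subset_rfl, Or.inr ⟨hk, rfl⟩⟩⟩
    choose f hfc hf using hf
    obtain ⟨W, hxW, hWU, hWc, hWf⟩ := exists_closed_set κ hκ f Uᶜ x0 hx0
      (fun x hx => ((hf x hx).1).trans Set.inter_subset_right) hfc
    have hW : ∀ x ∈ W, κ ≤ #↥(G.neighborSet x ∩ W) ∨
        #↥(G.neighborSet x ∩ Wᶜ) < #↥(G.neighborSet x ∩ W) := by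
      intro x hx
      have hxU := hWU hx
      have hfs : f x ⊆ G.neighborSet x ∩ W := fun y hy => ⟨((hf x hxU).1 hy).1, hWf x hx hy⟩
      rcases (hf x hxU).2 with h | ⟨hlt, h⟩
      · exact Or.inl (h.trans (mk_le_mk_of_subset hfs))
      · right
        have h1 : G.neighborSet x ∩ Wᶜ ⊆ G.neighborSet x ∩ U := by
          rintro y ⟨hy, hyW⟩
          refine ⟨hy, ?_⟩
          by_contra hyU
          exact hyW (hWf x hx (h ▸ ⟨hy, hyU⟩))
        refine (mk_le_mk_of_subset h1).trans_lt ((hA x hxU).trans_le ((hrem x hxU).trans ?_))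
        rw [← h]
        exact mk_le_mk_of_subset hfs
    obtain ⟨π, hπ⟩ := hyp W hWc hW
    let T : Set (V × Fin 2) := {p | ∃ h : p.1 ∈ W, π ⟨p.1, h⟩ = p.2}
    have hWm : ∀ x ∈ W, m x ≤ #↥(G.neighborSet x ∩ W) := by
      intro x hx
      rcases hW x hx with h | h
      · exact (min_le_left _ _).trans h
      · by_contra hcon
        have hcon := not_le.1 hcon
        have h1 : G.neighborSet x ⊆ (G.neighborSet x ∩ W) ∪ (G.neighborSet x ∩ Wᶜ) := by
          intro y hy
          by_cases h : y ∈ W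
          · exact Or.inl ⟨hy, h⟩
          · exact Or.inr ⟨hy, h⟩
        have h2 := (mk_le_mk_of_subset h1).trans (mk_union_le _ _)
        have h3 := add_lt_of_lt (hm x) hcon (h.trans hcon)
        exact absurd ((min_le_right _ _).trans h2) (not_le.2 h3)
    have hgood : GoodPartial G m (S ∪ T) := by
      refine ⟨?_, ?_⟩
      · rintro y a b (h1 | ⟨h1, h1'⟩) (h2 | ⟨h2, h2'⟩)
        · exact hSg.1 y a b h1 h2
        · exact absurd ⟨a, h1⟩ (hWU h2)
        · exact absurd ⟨b, h2⟩ (hWU h1)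
        · exact h1'.symm.trans h2'
      · rintro x a (h1 | ⟨h1, h1'⟩)
        · refine (hSg.2 x a h1).trans (mk_le_mk_of_subset ?_)
          rintro z ⟨hz, c', h, h'⟩
          exact ⟨hz, c', h, Or.inl h'⟩
        · change x ∈ W at h1
          change π ⟨x, h1⟩ = a at h1'
          let O : Set W := {y | (G.induce W).Adj ⟨x, h1⟩ y ∧ π y ≠ π ⟨x, h1⟩}
          let I : Set W := {y | (G.induce W).Adj ⟨x, h1⟩ y ∧ π y = π ⟨x, h1⟩}
          have hle2 : #I ≤ #O := hπ ⟨x, h1⟩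
          have hO : m x ≤ #O := by
            by_contra hcon
            have hcon := not_le.1 hcon
            have hs : G.neighborSet x ∩ W ⊆ (Subtype.val '' I) ∪ (Subtype.val '' O) := by
              rintro y ⟨hy, hyW⟩
              by_cases h : π ⟨y, hyW⟩ = π ⟨x, h1⟩
              · exact Or.inl ⟨⟨y, hyW⟩, ⟨hy, h⟩, rfl⟩
              · exact Or.inr ⟨⟨y, hyW⟩, ⟨hy, h⟩, rfl⟩
            have h2 := (mk_le_mk_of_subset hs).trans (mk_union_le _ _)
            have h3 := h2.trans (add_le_add mk_image_le mk_image_le)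
            have h4 := add_lt_of_lt (hm x) (hle2.trans_lt hcon) hcon
            exact absurd ((hWm x h1).trans h3) (not_le.2 h4)
          rw [← mk_image_eq (s := O) Subtype.val_injective] at hO
          refine hO.trans (mk_le_mk_of_subset ?_)
          rintro _ ⟨y, ⟨hy, hyc⟩, rfl⟩
          exact ⟨hy, π y, h1' ▸ hyc, Or.inr ⟨y.2, rfl⟩⟩
    have := hS.le_of_ge hgood Set.subset_union_left
    exact hx0 ⟨π ⟨x0, hxW⟩, this (Or.inr ⟨hxW, rfl⟩)⟩
  choose π hπ using hall
  refine ⟨π, fun x => ?_⟩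
  have h1 : m x ≤ #{y : V // G.Adj x y ∧ π y ≠ π x} := by
    refine (hSg.2 x (π x) (hπ x)).trans (mk_le_mk_of_subset ?_)
    rintro y ⟨hy, c', hc, hc'⟩
    exact ⟨hy, by rwa [hSg.1 y _ _ (hπ y) hc']⟩
  rcases min_le_iff.1 h1 with h | h
  · exact Or.inl h
  · right
    refine le_trans ?_ h
    exact mk_le_mk_of_subset (s := {y | G.Adj x y ∧ π y = π x}) (fun y hy => hy.1)
end

section
/- For each natural number n, every graph in which every vertex has infinite degree admits an ℵ_n-unfriendly partition. -/
open Cardinal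

universe u

namespace Unf

/-- If an infinite-or-zero cardinal is at most the size of a union, it is at most one of the parts. -/
lemma le_of_le_union {V : Type u} {c : Cardinal.{u}} (hc : c = 0 ∨ ℵ₀ ≤ c) {S A B : Set V}
    (h : c ≤ #S) (hS : S ⊆ A ∪ B) : c ≤ #A ∨ c ≤ #B := by
  rcases hc with rfl | hc
  · left; exact zero_le
  · by_contra hh
    push Not at hh
    have := add_lt_of_lt hc hh.1 hh.2
    exact absurd (h.trans ((mk_le_mk_of_subset hS).trans (mk_union_le A B))) (not_le.2 this)

/-- A partial good colouring. -/
structure Good {V : Type u} (G : SimpleGraph V) (d : V → Cardinal.{u}) (A B : Set V) : Prop where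
  disj : Disjoint A B
  left : ∀ x ∈ A, d x ≤ #(G.neighborSet x ∩ B : Set V)
  right : ∀ x ∈ B, d x ≤ #(G.neighborSet x ∩ A : Set V)

lemma mono_inter {V : Type u} {N B B' : Set V} {c : Cardinal.{u}} (h : c ≤ #(N ∩ B : Set V))
    (hB : B ⊆ B') : c ≤ #(N ∩ B' : Set V) :=
  h.trans (mk_le_mk_of_subset (Set.inter_subset_inter_right _ hB))

lemma exists_total {V : Type u} (G : SimpleGraph V) (d : V → Cardinal.{u})
    (hd : ∀ v, d v = 0 ∨ ℵ₀ ≤ d v) (hdeg : ∀ v, d v ≤ #(G.neighborSet v))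
    (H : ∀ R : Set V, R.Nonempty → (∀ x ∈ R, ℵ₀ ≤ d x ∧ d x ≤ #(G.neighborSet x ∩ R : Set V)) →
      ∃ A B : Set V, A ⊆ R ∧ B ⊆ R ∧ (A ∪ B).Nonempty ∧ Good G d A B) :
    ∃ A B : Set V, A ∪ B = Set.univ ∧ Good G d A B := by
  classical
  obtain ⟨⟨A, B⟩, hmax⟩ := zorn_le₀ {p : Set V × Set V | Good G d p.1 p.2} (by
    intro c hc hchain
    refine ⟨(⋃ p ∈ c, p.1, ⋃ p ∈ c, p.2), ⟨?_, ?_, ?_⟩, ?_⟩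
    · rw [Set.disjoint_left]
      intro x hx hy
      simp only [Set.mem_iUnion, exists_prop] at hx hy
      obtain ⟨p, hp, hxp⟩ := hx
      obtain ⟨q, hq, hxq⟩ := hy
      rcases hchain.total hp hq with h | h
      · exact Set.disjoint_left.1 (hc hq).disj (h.1 hxp) hxq
      · exact Set.disjoint_left.1 (hc hp).disj hxp (h.2 hxq)
    · intro x hx
      simp only [Set.mem_iUnion, exists_prop] at hx
      obtain ⟨p, hp, hxp⟩ := hx
      exact mono_inter ((hc hp).left x hxp) (Set.subset_biUnion_of_mem (u := fun p : Set V × Set V => p.2) hp)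
    · intro x hx
      simp only [Set.mem_iUnion, exists_prop] at hx
      obtain ⟨p, hp, hxp⟩ := hx
      exact mono_inter ((hc hp).right x hxp) (Set.subset_biUnion_of_mem (u := fun p : Set V × Set V => p.1) hp)
    · intro z hz
      exact ⟨Set.subset_biUnion_of_mem (u := fun p : Set V × Set V => p.1) hz,
        Set.subset_biUnion_of_mem (u := fun p : Set V × Set V => p.2) hz⟩)
  have hg : Good G d A B := hmax.prop
  have hle : ∀ A' B', Good G d A' B' → A ⊆ A' → B ⊆ B' → A' ⊆ A ∧ B' ⊆ B := by
    intro A' B' h1 h2 h3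
    have := hmax.le_of_ge (y := (A', B')) h1 ⟨h2, h3⟩
    exact ⟨this.1, this.2⟩
  refine ⟨A, B, ?_, hg⟩
  by_contra hne
  have hR : ((A ∪ B)ᶜ).Nonempty := by
    rw [Set.nonempty_compl]; exact hne
  have hout : ∀ x ∈ (A ∪ B)ᶜ, ¬ d x ≤ #(G.neighborSet x ∩ (A ∪ B) : Set V) := by
    intro x hx hxd
    have hxA : x ∉ A := fun h => hx (Or.inl h)
    have hxB : x ∉ B := fun h => hx (Or.inr h)
    rcases le_of_le_union (hd x) hxd (A := G.neighborSet x ∩ A) (B := G.neighborSet x ∩ B)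
      (by rw [Set.inter_union_distrib_left]) with h | h
    · refine hxB ((hle A (insert x B) ⟨?_, ?_, ?_⟩ subset_rfl (Set.subset_insert _ _)).2
        (Set.mem_insert _ _))
      · rw [Set.disjoint_insert_right]; exact ⟨hxA, hg.disj⟩
      · intro y hy; exact mono_inter (hg.left y hy) (Set.subset_insert _ _)
      · rintro y (rfl | hy)
        · exact h
        · exact hg.right y hy
    · refine hxA ((hle (insert x A) B ⟨?_, ?_, ?_⟩ (Set.subset_insert _ _) subset_rfl).1
        (Set.mem_insert _ _))
      · rw [Set.disjoint_insert_left]; exact ⟨hxB, hg.disj⟩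
      · rintro y (rfl | hy)
        · exact h
        · exact hg.left y hy
      · intro y hy; exact mono_inter (hg.right y hy) (Set.subset_insert _ _)
  obtain ⟨A', B', hA', hB', hne', hg'⟩ := H _ hR (by
    intro x hx
    have h1 := hout x hx
    refine ⟨(hd x).resolve_left fun h => h1 (by rw [h]; exact zero_le), ?_⟩
    refine (le_of_le_union (hd x) (hdeg x) (A := G.neighborSet x ∩ (A ∪ B)) ?_).resolve_left h1
    rw [← Set.inter_union_distrib_left, Set.union_compl_self, Set.inter_univ])
  have := hle (A ∪ A') (B ∪ B') ⟨?_, ?_, ?_⟩ Set.subset_union_left Set.subset_union_left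
  · obtain ⟨x, hx | hx⟩ := hne'
    · exact hA' hx (Or.inl (this.1 (Or.inr hx)))
    · exact hB' hx (Or.inr (this.2 (Or.inr hx)))
  · rw [Set.disjoint_left]
    rintro x (hx | hx) (hy | hy)
    · exact Set.disjoint_left.1 hg.disj hx hy
    · exact hB' hy (Or.inl hx)
    · exact hA' hx (Or.inr hy)
    · exact Set.disjoint_left.1 hg'.disj hx hy
  · rintro x (hx | hx)
    · exact mono_inter (hg.left x hx) Set.subset_union_left
    · exact mono_inter (hg'.left x hx) Set.subset_union_right
  · rintro x (hx | hx)
    · exact mono_inter (hg.right x hx) Set.subset_union_left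
    · exact mono_inter (hg'.right x hx) Set.subset_union_right

/-- A well-order of regular initial order type. -/
structure RegOrd (V : Type u) [LinearOrder V] : Prop where
  wf : WellFoundedLT V
  inf : ℵ₀ ≤ #V
  small : ∀ v : V, #(Set.Iio v) < #V
  bdd : ∀ S : Set V, #S < #V → ∃ b, ∀ s ∈ S, s < b

lemma exists_regOrd (V : Type u) (h : (#V).IsRegular) : ∃ _ : LinearOrder V, RegOrd V := by
  classical
  obtain ⟨r, hr, hr'⟩ := exists_ord_eq V
  let _ : LinearOrder V := linearOrderOfSTO r
  have hsmall : ∀ v : V, #(Set.Iio v) < #V := fun v => by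
    have := card_typein_lt (r := r) v hr'
    exact this
  refine ⟨inferInstance, ⟨⟨hr.wf⟩, h.aleph0_le, hsmall, ?_⟩⟩
  intro S hS
  by_contra hh
  push Not at hh
  have hU : (⋃ s ∈ S, Set.Iic s) = Set.univ := by
    ext b
    simp only [Set.mem_iUnion, Set.mem_Iic, exists_prop, Set.mem_univ, iff_true]
    exact hh b
  have := (card_biUnion_lt_iff_forall_of_isRegular (t := fun (a : V) (_ : a ∈ S) => Set.Iic a) h hS).2 (by
    intro a _
    have : Set.Iic a ⊆ Set.Iio a ∪ {a} := by
      intro x hx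
      rcases lt_or_eq_of_le (Set.mem_Iic.1 hx) with h | h
      · exact Or.inl h
      · exact Or.inr h
    refine ((mk_le_mk_of_subset this).trans (mk_union_le _ _)).trans_lt ?_
    refine add_lt_of_lt h.aleph0_le (hsmall a) ?_
    rw [mk_singleton]
    exact one_lt_aleph0.trans_le h.aleph0_le)
  rw [hU, mk_univ] at this
  exact lt_irrefl _ this

/-- Closed unbounded sets. -/
structure Club {V : Type u} [LinearOrder V] (K : Set V) : Prop where
  closed : ∀ a, (∃ c, c < a) → (∀ c < a, ∃ e ∈ K, c < e ∧ e < a) → a ∈ K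
  unb : ∀ c, ∃ e ∈ K, c < e

lemma Club.diag {V : Type u} [LinearOrder V] (h : RegOrd V) (hunc : ℵ₀ < #V) (K : V → Set V)
    (hK : ∀ v, Club (K v)) : Club {a | ∀ b < a, a ∈ K b} := by
  have := h.wf
  refine ⟨?_, ?_⟩
  · intro a _ h2 b hb
    refine (hK b).closed a ⟨b, hb⟩ ?_
    intro c hc
    obtain ⟨e, he, h3, h4⟩ := h2 (max b c) (max_lt hb hc)
    exact ⟨e, he b ((le_max_left _ _).trans_lt h3), (le_max_right _ _).trans_lt h3, h4⟩
  · intro c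
    have step : ∀ a : V, ∃ a', a < a' ∧ ∀ b < a, ∃ e ∈ K b, a < e ∧ e < a' := by
      intro a
      choose g hg using fun b => (hK b).unb a
      obtain ⟨a', ha'⟩ := h.bdd (insert a (g '' Set.Iio a)) (by
        refine (mk_insert_le).trans_lt (add_lt_of_lt h.inf (mk_image_le.trans_lt (h.small a)) ?_)
        exact one_lt_aleph0.trans_le h.inf)
      exact ⟨a', ha' _ (Set.mem_insert _ _), fun b hb => ⟨g b, (hg b).1, (hg b).2,
        ha' _ (Set.mem_insert_of_mem _ ⟨b, hb, rfl⟩)⟩⟩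
    choose s hs1 hs2 using step
    let q : ℕ → V := fun n => s^[n] c
    have hq : ∀ n, q (n+1) = s (q n) := fun n => Function.iterate_succ_apply' s n c
    have hbd : ∃ b, ∀ x ∈ Set.range q, x < b := by
      apply h.bdd
      exact (Set.countable_range q).le_aleph0.trans_lt hunc
    obtain ⟨b0, hb0⟩ := hbd
    let U : Set V := {b | ∀ n, q n < b}
    have hU : U.Nonempty := ⟨b0, fun n => hb0 _ ⟨n, rfl⟩⟩
    let a := wellFounded_lt.min U hU
    have ha : ∀ n, q n < a := wellFounded_lt.min_mem U hU
    have ha' : ∀ x < a, ∃ n, x ≤ q n := by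
      intro x hx
      by_contra hh
      push Not at hh
      exact wellFounded_lt.not_lt_min U (x := x) hh hx
    have hmono : ∀ n m, n ≤ m → q n ≤ q m := by
      intro n m hnm
      induction hnm with
      | refl => exact le_rfl
      | step _ ih => rw [hq]; exact ih.trans (hs1 _).le
    refine ⟨a, ?_, ha 0⟩
    intro b hb
    refine (hK b).closed a ⟨b, hb⟩ ?_
    intro x hx
    obtain ⟨n, hn⟩ := ha' (max x b) (max_lt hx hb)
    have hn' : max x b < q (n+1) := by rw [hq]; exact hn.trans_lt (hs1 _)
    obtain ⟨e, he, h1, h2⟩ := hs2 (q (n+1)) b ((le_max_right _ _).trans_lt hn')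
    rw [← hq] at h2
    exact ⟨e, he, ((le_max_left _ _).trans_lt hn').trans h1, h2.trans (ha _)⟩

lemma Club.inter_Ioi {V : Type u} [LinearOrder V] {K : Set V} (hK : Club K) (b : V) :
    Club (K ∩ Set.Ioi b) := by
  refine ⟨?_, ?_⟩
  · rintro a ⟨c, hc⟩ h2
    refine ⟨hK.closed a ⟨c, hc⟩ fun x hx => ?_, ?_⟩
    · obtain ⟨e, he, h⟩ := h2 x hx; exact ⟨e, he.1, h⟩
    · obtain ⟨e, he, h⟩ := h2 c hc; exact lt_trans he.2 h.2
  · intro c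
    obtain ⟨e, he, h⟩ := hK.unb (max b c)
    exact ⟨e, ⟨he, (le_max_left _ _).trans_lt h⟩, (le_max_right _ _).trans_lt h⟩

lemma Club.univ {V : Type u} [LinearOrder V] (h : RegOrd V) : Club (Set.univ : Set V) := by
  refine ⟨fun _ _ _ => trivial, fun c => ?_⟩
  obtain ⟨b, hb⟩ := h.bdd {c} (by rw [mk_singleton]; exact one_lt_aleph0.trans_le h.inf)
  exact ⟨b, trivial, hb c rfl⟩

lemma Club.inter {V : Type u} [LinearOrder V] (h : RegOrd V) (hunc : ℵ₀ < #V) {K L : Set V}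
    (hK : Club K) (hL : Club L) : Club (K ∩ L) := by
  classical
  have := h.wf
  have hne : Nonempty V := by
    rw [← mk_ne_zero_iff]; exact (aleph0_pos.trans hunc).ne'
  refine ⟨?_, ?_⟩
  · rintro a hc h2
    refine ⟨hK.closed a hc fun x hx => ?_, hL.closed a hc fun x hx => ?_⟩
    · obtain ⟨e, he, h⟩ := h2 x hx; exact ⟨e, he.1, h⟩
    · obtain ⟨e, he, h⟩ := h2 x hx; exact ⟨e, he.2, h⟩
  · intro c
    obtain ⟨c0, _, hc0⟩ := (Club.univ h).unb c
    have hD := Club.diag h hunc (fun v => if v = c then K else L) (fun v => by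
      split_ifs <;> assumption)
    obtain ⟨e, he, h1⟩ := hD.unb c0
    have e1 := he c (hc0.trans h1)
    have e2 := he c0 h1
    simp only [if_true] at e1
    rw [if_neg hc0.ne'] at e2
    exact ⟨e, ⟨e1, e2⟩, hc0.trans h1⟩

/-- Stationary sets. -/
def Stat {V : Type u} [LinearOrder V] (S : Set V) : Prop := ∀ K, Club K → (S ∩ K).Nonempty

lemma Stat.inter_club {V : Type u} [LinearOrder V] (h : RegOrd V) (hunc : ℵ₀ < #V) {S K : Set V}
    (hS : Stat S) (hK : Club K) : Stat (S ∩ K) := by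
  intro L hL
  rw [Set.inter_assoc]
  exact hS _ (Club.inter h hunc hK hL)

lemma Stat.of_union {V : Type u} [LinearOrder V] (h : RegOrd V) (hunc : ℵ₀ < #V) {S T : Set V}
    (hS : Stat (S ∪ T)) : Stat S ∨ Stat T := by
  by_contra hh
  push Not at hh
  obtain ⟨h1, h2⟩ := hh
  simp only [Stat, not_forall] at h1 h2
  obtain ⟨K, hK, hK'⟩ := h1
  obtain ⟨L, hL, hL'⟩ := h2
  obtain ⟨x, hx | hx, hxK⟩ := hS _ (Club.inter h hunc hK hL)
  · exact hK' ⟨x, hx, hxK.1⟩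
  · exact hL' ⟨x, hx, hxK.2⟩

lemma Stat.card {V : Type u} [LinearOrder V] (h : RegOrd V) {S : Set V} (hS : Stat S) :
    #V ≤ #S := by
  by_contra hh
  obtain ⟨b, hb⟩ := h.bdd S (not_le.1 hh)
  obtain ⟨x, hx, hx'⟩ := hS _ ((Club.univ h).inter_Ioi b)
  exact lt_asymm (hb x hx) hx'.2

lemma exists_rec {V : Type u} [LinearOrder V] [WellFoundedLT V] {β : Type*}
    (F : ∀ a : V, ((b : V) → b < a → β) → β) : ∃ c : V → β, ∀ a, c a = F a (fun b _ => c b) :=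
  ⟨wellFounded_lt.fix F, fun a => WellFounded.fix_eq wellFounded_lt F a⟩

lemma case_stat {V : Type u} [LinearOrder V] (h : RegOrd V) (hunc : ℵ₀ < #V) (G : SimpleGraph V)
    (d : V → Cardinal.{u}) (hd : ∀ v, ℵ₀ ≤ d v) (hdV : ∀ v, d v ≤ #V)
    (hst : Stat {a | ∃ y, a ≤ y ∧ d y ≤ #(G.neighborSet y ∩ Set.Iio a : Set V)}) :
    ∃ A B : Set V, (A ∪ B).Nonempty ∧ Good G d A B := by
  classical
  have := h.wf
  have hy : ∀ a, ∃ y, a ∈ {a | ∃ y, a ≤ y ∧ d y ≤ #(G.neighborSet y ∩ Set.Iio a : Set V)} →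
      a ≤ y ∧ d y ≤ #(G.neighborSet y ∩ Set.Iio a : Set V) := by
    intro a
    by_cases ha : a ∈ {a | ∃ y, a ≤ y ∧ d y ≤ #(G.neighborSet y ∩ Set.Iio a : Set V)}
    · obtain ⟨y, hy⟩ := ha
      exact ⟨y, fun _ => hy⟩
    · exact ⟨a, fun h => absurd h ha⟩
  choose y hy using hy
  have hK0 : Club {a | ∀ b < a, a ∈ Set.univ ∩ Set.Ioi (y b)} :=
    Club.diag h hunc _ (fun b => (Club.univ h).inter_Ioi (y b))
  have hE0 := hst.inter_club h hunc hK0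
  set E0 : Set V := _ ∩ {a | ∀ b < a, a ∈ Set.univ ∩ Set.Ioi (y b)} with hE0def
  have hy1 : ∀ a ∈ E0, a ≤ y a := fun a ha => (hy a ha.1).1
  have hy2 : ∀ a ∈ E0, d (y a) ≤ #(G.neighborSet (y a) ∩ Set.Iio a : Set V) :=
    fun a ha => (hy a ha.1).2
  have hy3 : ∀ a ∈ E0, ∀ b < a, y b < a := fun a ha b hb => (ha.2 b hb).2
  have hinj : ∀ a ∈ E0, ∀ b ∈ E0, y a = y b → a = b := by
    intro a ha b hb hab
    rcases lt_trichotomy a b with hlt | heq | hlt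
    · exact absurd (hab ▸ ((hy3 b hb a hlt).trans_le (hy1 b hb))) (lt_irrefl _)
    · exact heq
    · exact absurd (hab ▸ ((hy3 a ha b hlt).trans_le (hy1 a ha))) (lt_irrefl _)
  obtain ⟨c, hc⟩ := exists_rec (V := V) (β := Prop) (fun a g =>
    d (y a) ≤ #{z | z ∈ G.neighborSet (y a) ∩ Set.Iio a ∧
      ¬ ∃ b, ∃ hb : b < a, b ∈ E0 ∧ y b = z ∧ g b hb})
  -- pick a stationary class
  have hcls : ∃ S : Set V, S ⊆ E0 ∧ Stat S ∧ ∀ a ∈ S,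
      d (y a) ≤ #((G.neighborSet (y a) ∩ Set.Iio a) \ (y '' S) : Set V) := by
    have hsplit : E0 = (E0 ∩ {a | c a}) ∪ (E0 ∩ {a | ¬ c a}) := by
      ext a; simp only [Set.mem_union, Set.mem_inter_iff, Set.mem_ofPred_eq]; tauto
    rw [hsplit] at hE0
    rcases hE0.of_union h hunc with hS | hS
    · refine ⟨_, Set.inter_subset_left, hS, ?_⟩
      intro a ha
      have h1 : c a := ha.2
      rw [hc] at h1
      refine h1.trans (mk_le_mk_of_subset ?_)
      rintro z ⟨hz1, hz2⟩
      refine ⟨hz1, ?_⟩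
      rintro ⟨b, hb, rfl⟩
      apply hz2
      exact ⟨b, (hy1 b hb.1).trans_lt hz1.2, hb.1, rfl, hb.2⟩
    · refine ⟨_, Set.inter_subset_left, hS, ?_⟩
      intro a ha
      have h1 : ¬ c a := ha.2
      rw [hc] at h1
      refine ((le_of_le_union (Or.inr (hd _)) (hy2 a ha.1)
        (B := (G.neighborSet (y a) ∩ Set.Iio a) \ (y '' (E0 ∩ {a | ¬ c a}))) ?_).resolve_left h1)
      intro z hz
      by_cases hzz : ∃ b, ∃ hb : b < a, b ∈ E0 ∧ y b = z ∧ c b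
      · right
        refine ⟨hz, ?_⟩
        rintro ⟨b', hb', hbz'⟩
        obtain ⟨b, hb, hbE, hbz, hcb⟩ := hzz
        have : b = b' := hinj b hbE b' hb'.1 (hbz.trans hbz'.symm)
        subst this
        exact hb'.2 hcb
      · left
        exact ⟨hz, hzz⟩
  obtain ⟨S, hSE, hS, hSd⟩ := hcls
  -- non-stationary vertices
  have hKx : ∀ x, ∃ K, Club K ∧ (¬ Stat {a | a ∈ S ∧ G.Adj x (y a)} →
      ¬ ({a | a ∈ S ∧ G.Adj x (y a)} ∩ K).Nonempty) := by
    intro x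
    by_cases hx : Stat {a | a ∈ S ∧ G.Adj x (y a)}
    · exact ⟨_, Club.univ h, fun h => absurd hx h⟩
    · have hx' := hx
      simp only [Stat, not_forall] at hx
      obtain ⟨K, hK, hK'⟩ := hx
      exact ⟨K, hK, fun _ => hK'⟩
  choose K hK hK' using hKx
  have hD := Club.diag h hunc K hK
  have hS' := hS.inter_club h hunc hD
  refine ⟨y '' (S ∩ {a | ∀ b < a, a ∈ K b}),
    {x | Stat {a | a ∈ S ∧ G.Adj x (y a)}} \ (y '' S), ?_, ?_, ?_, ?_⟩
  · obtain ⟨a, ha, _⟩ := hS' _ (Club.univ h)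
    exact ⟨y a, Or.inl ⟨a, ha, rfl⟩⟩
  · rw [Set.disjoint_left]
    rintro x ⟨a, ha, rfl⟩ hx
    exact hx.2 ⟨a, ha.1, rfl⟩
  · rintro x ⟨a, ha, rfl⟩
    refine (hSd a ha.1).trans (mk_le_mk_of_subset ?_)
    rintro z ⟨hz1, hz2⟩
    refine ⟨hz1.1, ?_, hz2⟩
    by_contra hns
    exact hK' z hns ⟨a, ⟨ha.1, SimpleGraph.Adj.symm hz1.1⟩, ha.2 z hz1.2⟩
  · rintro x ⟨hx, _⟩
    have hst' : Stat {a | a ∈ S ∧ G.Adj x (y a)} := hx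
    have h2 := (hst'.inter_club h hunc hD).card h
    refine (hdV x).trans (h2.trans ?_)
    have hi : Set.InjOn y ({a | a ∈ S ∧ G.Adj x (y a)} ∩ {a | ∀ b < a, a ∈ K b}) := by
      intro a ha b hb hab
      exact hinj a (hSE ha.1.1) b (hSE hb.1.1) hab
    rw [← mk_image_eq_of_injOn _ _ hi]
    refine mk_le_mk_of_subset ?_
    rintro z ⟨a, ha, rfl⟩
    exact ⟨ha.1.2, a, ⟨ha.1.1, ha.2⟩, rfl⟩

lemma inj_choice {V : Type u} [LinearOrder V] (h : RegOrd V) (A : V → Set V)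
    (hA : ∀ v, #V ≤ #(A v)) : ∃ i : V → V, Function.Injective i ∧ ∀ v, i v ∈ A v := by
  classical
  have := h.wf
  have key : ∀ (v : V) (g : (b : V) → b < v → V), ∃ z, z ∈ A v ∧ ∀ b (hb : b < v), g b hb ≠ z := by
    intro v g
    by_contra hh
    push Not at hh
    have hsub : A v ⊆ Set.range (fun b : Set.Iio v => g b.1 b.2) := by
      intro z hz
      obtain ⟨b, hb, e⟩ := hh z hz
      exact ⟨⟨b, hb⟩, e⟩
    exact absurd ((hA v).trans ((mk_le_mk_of_subset hsub).trans mk_range_le)) (not_le.2 (h.small v))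
  choose F hF1 hF2 using key
  obtain ⟨i, hi⟩ := exists_rec F
  refine ⟨i, ?_, fun v => by rw [hi]; exact hF1 _ _⟩
  have hlt : ∀ a b, a < b → i a ≠ i b := by
    intro a b hab
    rw [hi b]
    exact hF2 b (fun c _ => i c) a hab
  intro a b hab
  rcases lt_trichotomy a b with hl | he | hl
  · exact absurd hab (hlt _ _ hl)
  · exact he
  · exact absurd hab.symm (hlt _ _ hl)

lemma caseB {V : Type u} [LinearOrder V] (h : RegOrd V) (G : SimpleGraph V)
    (d : V → Cardinal.{u}) (hdV : ∀ v, d v ≤ #V) (b : V → V) (f0 : V → Bool)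
    (hx : ∀ x, d x ≤ #{y | G.Adj x y ∧ b y = b x ∧ f0 y ≠ f0 x} ∨
      #V ≤ #(b '' (G.neighborSet x))) :
    ∃ f : V → Bool, ∀ x, d x ≤ #{y | G.Adj x y ∧ f y ≠ f x} := by
  classical
  have := h.wf
  have hne : Nonempty V := by
    rw [← mk_ne_zero_iff]; exact (aleph0_pos.trans_le h.inf).ne'
  obtain ⟨e⟩ : Nonempty (V ≃ V × V) := by
    rw [← Cardinal.eq, mk_prod, lift_id, mul_eq_self h.inf]
  let A : V → Set V := fun x => if #V ≤ #(b '' (G.neighborSet x)) then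
    (b '' (G.neighborSet x)) ∩ Set.Ioi (b x) else Set.univ
  have hA : ∀ x, #V ≤ #(A x) := by
    intro x
    by_cases hc : #V ≤ #(b '' (G.neighborSet x))
    · simp only [A, if_pos hc]
      obtain ⟨b', hb'⟩ := h.bdd {b x} (by rw [mk_singleton]; exact one_lt_aleph0.trans_le h.inf)
      refine (le_of_le_union (Or.inr h.inf) hc (A := Set.Iio b') ?_).resolve_left
        (not_le.2 (h.small _))
      intro z hz
      rcases lt_or_ge (b x) z with hlt | hge
      · exact Or.inr ⟨hz, hlt⟩
      · exact Or.inl (hge.trans_lt (hb' _ rfl))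
    · simp only [A, if_neg hc, mk_univ, le_refl]
  obtain ⟨i, hi, hiA⟩ := inj_choice h (fun v => A (e v).1) (fun v => hA _)
  have hw : ∀ v, ∃ w, #V ≤ #(b '' (G.neighborSet (e v).1)) →
      b (e v).1 < i v ∧ G.Adj (e v).1 w ∧ b w = i v := by
    intro v
    by_cases hc : #V ≤ #(b '' (G.neighborSet (e v).1))
    · have h1 := hiA v
      simp only [A, if_pos hc] at h1
      obtain ⟨⟨w, hw, hw'⟩, h2⟩ := h1
      exact ⟨w, fun _ => ⟨h2, hw, hw'⟩⟩
    · exact ⟨v, fun h => absurd h hc⟩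
  choose w hw using hw
  have hl := Function.leftInverse_invFun hi
  obtain ⟨fl, hfl⟩ := exists_rec (V := V) (β := Bool) (fun m g =>
    if hm : b (e (Function.invFun i m)).1 < m then
      Bool.xor (!(Bool.xor (f0 (e (Function.invFun i m)).1) (f0 (w (Function.invFun i m))))) (g _ hm)
    else false)
  refine ⟨fun v => Bool.xor (f0 v) (fl (b v)), fun x => ?_⟩
  by_cases hc : #V ≤ #(b '' (G.neighborSet x))
  · refine (hdV x).trans ?_
    refine mk_le_of_injective (f := fun ξ : V =>
      (⟨w (e.symm (x, ξ)), ?_⟩ : {y | G.Adj x y ∧ Bool.xor (f0 y) (fl (b y)) ≠ Bool.xor (f0 x) (fl (b x))})) ?_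
    · have h1 := hw (e.symm (x, ξ))
      simp only [Equiv.apply_symm_apply] at h1
      obtain ⟨h2, h3, h4⟩ := h1 hc
      refine ⟨h3, ?_⟩
      rw [h4, hfl (i _), hl]
      simp only [Equiv.apply_symm_apply]
      rw [dif_pos h2]
      cases f0 (w (e.symm (x, ξ))) <;> cases f0 x <;> cases fl (b x) <;> simp
    · intro ξ η hξη
      simp only [Subtype.mk.injEq] at hξη
      have h1 := hw (e.symm (x, ξ))
      have h2 := hw (e.symm (x, η))
      simp only [Equiv.apply_symm_apply] at h1 h2
      have h3 := (h1 hc).2.2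
      rw [hξη, (h2 hc).2.2] at h3
      have := e.symm.injective (hi h3)
      simpa using this.symm
  · refine ((hx x).resolve_right hc).trans (mk_le_mk_of_subset ?_)
    rintro z ⟨h1, h2, h3⟩
    refine ⟨h1, ?_⟩
    simp only [h2]
    intro h4
    apply h3
    simpa using h4

lemma case_nonstat {V : Type u} [LinearOrder V] (h : RegOrd V) (hunc : ℵ₀ < #V) (G : SimpleGraph V)
    (d : V → Cardinal.{u}) (hd : ∀ v, ℵ₀ ≤ d v) (hdeg : ∀ v, d v ≤ #(G.neighborSet v))
    (IH : ∀ R : Set V, #R < #V → ∀ d' : V → Cardinal.{u}, (∀ v, d' v = 0 ∨ ℵ₀ ≤ d' v) →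
      (∀ v ∈ R, d' v ≤ #(G.neighborSet v ∩ R : Set V)) →
      ∃ f : V → Bool, ∀ v ∈ R, d' v ≤ #{w | G.Adj v w ∧ w ∈ R ∧ f w ≠ f v})
    (K : Set V) (hK : Club K)
    (hKE : ∀ a ∈ K, ∀ y, a ≤ y → #(G.neighborSet y ∩ Set.Iio a : Set V) < d y) :
    ∃ f : V → Bool, ∀ x, d x ≤ #{y | G.Adj x y ∧ f y ≠ f x} := by
  classical
  have := h.wf
  have hdV : ∀ v, d v ≤ #V := fun v => (hdeg v).trans (mk_set_le _)
  have hg : ∀ y, ∃ g, d y < #V → d y ≤ #(G.neighborSet y ∩ Set.Iio g : Set V) := by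
    intro y
    by_cases hy : d y < #V
    · obtain ⟨p, hp, hpc⟩ := le_mk_iff_exists_subset.1 (hdeg y)
      obtain ⟨g, hg⟩ := h.bdd p (hpc ▸ hy)
      refine ⟨g, fun _ => ?_⟩
      rw [← hpc]
      exact mk_le_mk_of_subset (fun z hz => ⟨hp hz, hg z hz⟩)
    · exact ⟨y, fun h => absurd h hy⟩
  choose g hg using hg
  have hD : Club {a | ∀ b < a, a ∈ K ∩ Set.Ioi (g b)} :=
    Club.diag h hunc _ (fun b => hK.inter_Ioi (g b))
  set D : Set V := {a | ∀ b < a, a ∈ K ∩ Set.Ioi (g b)} with hDdef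
  let b : V → V := fun v => wellFounded_lt.min {a | a ∈ D ∧ v < a} (hD.unb v)
  have hbD : ∀ v, b v ∈ D := fun v => (wellFounded_lt.min_mem {a | a ∈ D ∧ v < a} (hD.unb v)).1
  have hbv : ∀ v, v < b v := fun v => (wellFounded_lt.min_mem {a | a ∈ D ∧ v < a} (hD.unb v)).2
  have hbm : ∀ v a, a ∈ D → v < a → b v ≤ a := fun v a h1 h2 =>
    not_lt.1 (wellFounded_lt.not_lt_min {a | a ∈ D ∧ v < a} (x := a) ⟨h1, h2⟩)
  -- demands met inside blocks
  have hblock : ∀ y, d y < #V → d y ≤ #(G.neighborSet y ∩ {w | b w = b y} : Set V) := by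
    intro y hy
    let l := wellFounded_lt.min {w | b w = b y} ⟨y, rfl⟩
    have hl : b l = b y := wellFounded_lt.min_mem {w | b w = b y} ⟨y, rfl⟩
    have hlm : ∀ w, b w = b y → l ≤ w := fun w hw =>
      not_lt.1 (wellFounded_lt.not_lt_min {w | b w = b y} (x := w) hw)
    have hsmall : #(G.neighborSet y ∩ Set.Iio l : Set V) < d y := by
      by_cases hc : ∃ c, c < l
      · have hlK : l ∈ D := by
          by_contra hlD
          refine hlD (hD.closed l hc fun c hcl => ⟨b c, hbD c, hbv c, ?_⟩)
          by_contra hbc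
          have hbc : l < b c := lt_of_le_of_ne (not_lt.1 hbc) (fun e => hlD (e ▸ hbD c))
          have h1 : b l ≤ b c := hbm _ _ (hbD c) hbc
          have h2 : b c ≤ b l := hbm _ _ (hbD l) (hcl.trans (hbv l))
          exact absurd (hlm c ((le_antisymm h2 h1).trans hl)) (not_le.2 hcl)
        obtain ⟨c, hc⟩ := hc
        exact hKE l (hlK c hc).1 y (hlm y rfl)
      · have : (G.neighborSet y ∩ Set.Iio l : Set V) = ∅ := by
          ext z
          simp only [Set.mem_inter_iff, Set.mem_Iio, Set.mem_empty_iff_false, iff_false]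
          exact fun hz => hc ⟨z, hz.2⟩
        rw [this, mk_eq_zero]
        exact aleph0_pos.trans_le (hd y)
    have hbig : d y ≤ #(G.neighborSet y ∩ Set.Iio (b y) : Set V) :=
      mono_inter (hg y hy) (Set.Iio_subset_Iio ((hbD y) y (hbv y)).2.le)
    refine (le_of_le_union (Or.inr (hd y)) hbig (A := G.neighborSet y ∩ Set.Iio l) ?_).resolve_left
      (not_le.2 hsmall)
    rintro z ⟨hz1, hz2⟩
    rcases lt_or_ge z l with hzl | hzl
    · exact Or.inl ⟨hz1, hzl⟩
    · refine Or.inr ⟨hz1, le_antisymm (hbm _ _ (hbD y) hz2) ?_⟩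
      rw [← hl]
      exact hbm _ _ (hbD z) (hzl.trans_lt (hbv z))
  have hcol : ∀ m, ∃ f : V → Bool, ∀ v ∈ {w | b w = m},
      (if d v < #V then d v else 0) ≤ #{w | G.Adj v w ∧ w ∈ {w | b w = m} ∧ f w ≠ f v} := by
    intro m
    refine IH {w | b w = m} ?_ (fun v => if d v < #V then d v else 0) ?_ ?_
    · refine (mk_le_mk_of_subset ?_).trans_lt (h.small m)
      rintro w rfl
      exact hbv w
    · intro v
      by_cases hv : d v < #V
      · simp only [if_pos hv]; exact Or.inr (hd v)
      · simp only [if_neg hv]; exact Or.inl trivial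
    · rintro v rfl
      by_cases hv : d v < #V
      · simp only [if_pos hv]; exact hblock v hv
      · simp only [if_neg hv]; exact zero_le
  choose F hF using hcol
  refine caseB h G d hdV b (fun v => F (b v) v) (fun x => ?_)
  by_cases hv : d x < #V
  · left
    have h1 := hF (b x) x rfl
    rw [if_pos hv] at h1
    refine h1.trans (mk_le_mk_of_subset ?_)
    rintro z ⟨h2, h3, h4⟩
    have h3 : b z = b x := h3
    exact ⟨h2, h3, by rw [h3]; exact h4⟩
  · right
    by_contra hc
    obtain ⟨a, ha⟩ := h.bdd _ (not_le.1 hc)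
    refine hv (((hdeg x).trans (mk_le_mk_of_subset ?_)).trans_lt (h.small a))
    intro z hz
    exact (hbv z).trans (ha _ ⟨z, hz, rfl⟩)

/-- The partition statement for graphs with at most `κ` vertices and arbitrary demands. -/
def Q (κ : Cardinal.{u}) : Prop :=
  ∀ (V : Type u) (G : SimpleGraph V) (d : V → Cardinal.{u}), (∀ v, d v = 0 ∨ ℵ₀ ≤ d v) →
    (∀ v, d v ≤ #(G.neighborSet v)) → #V ≤ κ →
    ∃ f : V → Bool, ∀ x, d x ≤ #{y | G.Adj x y ∧ f y ≠ f x}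

lemma card_induce {V : Type u} (G : SimpleGraph V) (R B : Set V) (v : R) :
    #(G.neighborSet v ∩ (R ∩ B) : Set V) =
      #((G.comap (Subtype.val : R → V)).neighborSet v ∩ {w | w.1 ∈ B} : Set R) := by
  rw [← mk_image_eq (s := ((G.comap (Subtype.val : R → V)).neighborSet v ∩ {w | w.1 ∈ B}))
    Subtype.val_injective]
  congr 2
  ext w
  constructor
  · rintro ⟨h1, h2, h3⟩
    exact ⟨⟨w, h2⟩, ⟨h1, h3⟩, rfl⟩
  · rintro ⟨w, ⟨h1, h3⟩, rfl⟩
    exact ⟨h1, w.2, h3⟩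

lemma card_induce' {V : Type u} (G : SimpleGraph V) (R : Set V) (v : R) :
    #(G.neighborSet v ∩ R : Set V) = #((G.comap (Subtype.val : R → V)).neighborSet v) := by
  have := card_induce G R Set.univ v
  simpa using this

lemma Q.sub {κ : Cardinal.{u}} (hQ : Q κ) {V : Type u} (G : SimpleGraph V) (d : V → Cardinal.{u})
    (hd : ∀ v, d v = 0 ∨ ℵ₀ ≤ d v) (R : Set V) (hR : #R ≤ κ)
    (hdeg : ∀ v ∈ R, d v ≤ #(G.neighborSet v ∩ R : Set V)) :
    ∃ f : V → Bool, ∀ v ∈ R, d v ≤ #{w | G.Adj v w ∧ w ∈ R ∧ f w ≠ f v} := by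
  classical
  obtain ⟨f, hf⟩ := hQ R (G.comap (Subtype.val : R → V)) (fun v => d v) (fun v => hd v)
    (fun v => by rw [← card_induce']; exact hdeg v v.2) hR
  refine ⟨fun v => if h : v ∈ R then f ⟨v, h⟩ else false, fun v hv => ?_⟩
  refine (hf ⟨v, hv⟩).trans ?_
  rw [← mk_image_eq (s := {y | (G.comap (Subtype.val : R → V)).Adj ⟨v, hv⟩ y ∧ f y ≠ f ⟨v, hv⟩})
    Subtype.val_injective]
  refine mk_le_mk_of_subset ?_
  rintro _ ⟨w, ⟨h1, h2⟩, rfl⟩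
  refine ⟨h1, w.2, ?_⟩
  simp only [w.2, hv, dif_pos]
  exact h2

lemma good_of_col {V : Type u} (G : SimpleGraph V) (d : V → Cardinal.{u}) (R : Set V)
    (f : V → Bool) (hf : ∀ v ∈ R, d v ≤ #{w | G.Adj v w ∧ w ∈ R ∧ f w ≠ f v}) :
    Good G d (R ∩ {v | f v = false}) (R ∩ {v | f v = true}) ∧
      (R ∩ {v | f v = false}) ∪ (R ∩ {v | f v = true}) = R := by
  refine ⟨⟨?_, ?_, ?_⟩, ?_⟩
  · rw [Set.disjoint_left]
    rintro x ⟨_, h1⟩ ⟨_, h2⟩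
    simp only [Set.mem_ofPred_eq] at h1 h2
    simp [h1] at h2
  · rintro x ⟨hx, h1⟩
    refine (hf x hx).trans (mk_le_mk_of_subset ?_)
    rintro w ⟨h2, h3, h4⟩
    simp only [Set.mem_ofPred_eq] at h1
    refine ⟨h2, h3, ?_⟩
    rw [h1] at h4
    simpa using h4
  · rintro x ⟨hx, h1⟩
    refine (hf x hx).trans (mk_le_mk_of_subset ?_)
    rintro w ⟨h2, h3, h4⟩
    simp only [Set.mem_ofPred_eq] at h1
    refine ⟨h2, h3, ?_⟩
    rw [h1] at h4
    simpa using h4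
  · ext x
    simp only [Set.mem_union, Set.mem_inter_iff, Set.mem_ofPred_eq]
    cases f x <;> simp

lemma col_of_good {V : Type u} (G : SimpleGraph V) (d : V → Cardinal.{u}) (A B : Set V)
    (hAB : A ∪ B = Set.univ) (hg : Good G d A B) :
    ∃ f : V → Bool, ∀ x, d x ≤ #{y | G.Adj x y ∧ f y ≠ f x} := by
  classical
  refine ⟨fun v => decide (v ∈ A), fun x => ?_⟩
  have hx : x ∈ A ∪ B := hAB ▸ Set.mem_univ x
  have hdj := Set.disjoint_left.1 hg.disj
  rcases hx with hx | hx
  · refine (hg.left x hx).trans (mk_le_mk_of_subset ?_)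
    rintro y ⟨h1, h2⟩
    have : y ∉ A := fun h => hdj h h2
    exact ⟨h1, by simp [hx, this]⟩
  · refine (hg.right x hx).trans (mk_le_mk_of_subset ?_)
    rintro y ⟨h1, h2⟩
    have : x ∉ A := fun h => hdj h hx
    exact ⟨h1, by simp [h2, this]⟩

lemma exists_good {W : Type u} (hreg : (#W).IsRegular) (IH : ∀ l < #W, Q l) (G : SimpleGraph W)
    (d : W → Cardinal.{u}) (hd : ∀ v, ℵ₀ ≤ d v) (hdeg : ∀ v, d v ≤ #(G.neighborSet v)) :
    ∃ A B : Set W, (A ∪ B).Nonempty ∧ Good G d A B := by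
  classical
  obtain ⟨_, h⟩ := exists_regOrd W hreg
  have hdV : ∀ v, d v ≤ #W := fun v => (hdeg v).trans (mk_set_le _)
  have hne : Nonempty W := by
    rw [← mk_ne_zero_iff]; exact (aleph0_pos.trans_le h.inf).ne'
  have fin : (∃ f : W → Bool, ∀ x, d x ≤ #{y | G.Adj x y ∧ f y ≠ f x}) →
      ∃ A B : Set W, (A ∪ B).Nonempty ∧ Good G d A B := by
    rintro ⟨f, hf⟩
    have := good_of_col G d Set.univ f (by simpa using hf)
    refine ⟨_, _, ?_, this.1⟩
    rw [this.2]
    exact Set.univ_nonempty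
  rcases h.inf.eq_or_lt with heq | hunc
  · apply fin
    refine caseB h G d hdV id (fun _ => false) (fun x => Or.inr ?_)
    rw [Set.image_id, ← heq]
    exact (hd x).trans (hdeg x)
  · by_cases hst : Stat {a | ∃ y, a ≤ y ∧ d y ≤ #(G.neighborSet y ∩ Set.Iio a : Set W)}
    · exact case_stat h hunc G d hd hdV hst
    · apply fin
      simp only [Stat, not_forall] at hst
      obtain ⟨K, hK, hK'⟩ := hst
      refine case_nonstat h hunc G d hd hdeg ?_ K hK ?_
      · intro R hR d' hd' hdeg'
        exact (IH _ hR).sub G d' hd' R le_rfl hdeg'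
      · intro a ha y hay
        by_contra hh
        exact hK' ⟨a, ⟨y, hay, not_lt.1 hh⟩, ha⟩

lemma Q_step {κ : Cardinal.{u}} (hreg : κ.IsRegular) (IH : ∀ l < κ, Q l) : Q κ := by
  intro V G d hd hdeg hV
  obtain ⟨A, B, hAB, hg⟩ := exists_total G d hd hdeg (by
    intro R hRne hR
    have hRκ : #R ≤ κ := (mk_set_le R).trans hV
    rcases hRκ.lt_or_eq with hlt | heq
    · obtain ⟨f, hf⟩ := (IH _ hlt).sub G d hd R le_rfl (fun v hv => (hR v hv).2)
      have := good_of_col G d R f hf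
      exact ⟨_, _, Set.inter_subset_left, Set.inter_subset_left, by rwa [this.2], this.1⟩
    · obtain ⟨A, B, hne, hg⟩ := exists_good (W := R) (heq ▸ hreg) (heq ▸ IH)
        (G.comap (Subtype.val : R → V)) (fun v => d v) (fun v => (hR v v.2).1)
        (fun v => by rw [← card_induce']; exact (hR v v.2).2)
      refine ⟨Subtype.val '' A, Subtype.val '' B, ?_, ?_, ?_, ?_, ?_, ?_⟩
      · rintro _ ⟨x, _, rfl⟩; exact x.2
      · rintro _ ⟨x, _, rfl⟩; exact x.2
      · rw [← Set.image_union]; exact hne.image _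
      · exact (Set.disjoint_image_iff Subtype.val_injective).2 hg.disj
      · rintro _ ⟨x, hx, rfl⟩
        refine (hg.left x hx).trans ?_
        rw [← mk_image_eq (s := _ ∩ B) Subtype.val_injective]
        refine mk_le_mk_of_subset ?_
        rintro _ ⟨w, ⟨h1, h2⟩, rfl⟩
        exact ⟨h1, w, h2, rfl⟩
      · rintro _ ⟨x, hx, rfl⟩
        refine (hg.right x hx).trans ?_
        rw [← mk_image_eq (s := _ ∩ A) Subtype.val_injective]
        refine mk_le_mk_of_subset ?_
        rintro _ ⟨w, ⟨h1, h2⟩, rfl⟩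
        exact ⟨h1, w, h2, rfl⟩)
  exact col_of_good G d A B hAB hg

lemma Q_fin {κ : Cardinal.{u}} (h : κ < ℵ₀) : Q κ := by
  intro V G d hd hdeg hV
  refine ⟨fun _ => false, fun x => ?_⟩
  rcases hd x with h0 | h0
  · rw [h0]; exact zero_le
  · exact absurd (h0.trans ((hdeg x).trans ((mk_set_le _).trans hV))) (not_le.2 h)

lemma Q_aleph (n : ℕ) : Q (Cardinal.aleph.{u} n) := by
  induction n with
  | zero =>
    rw [Nat.cast_zero, aleph_zero]
    exact Q_step isRegular_aleph0 (fun l hl => Q_fin hl)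
  | succ n ih =>
    have hreg := isRegular_aleph_add_one (n : Ordinal.{u})
    rw [Nat.cast_succ]
    refine Q_step hreg (fun l hl => ?_)
    rw [← succ_aleph, Order.lt_succ_iff] at hl
    intro V G d hd hdeg hV
    exact ih V G d hd hdeg (hV.trans hl)

lemma exists_small {V : Type u} {κ : Cardinal.{u}} (hκ : ℵ₀ ≤ κ) (p : V → Set V)
    (hp : ∀ v, #(p v) ≤ κ) (x0 : V) : ∃ S : Set V, x0 ∈ S ∧ #S ≤ κ ∧ ∀ x ∈ S, p x ⊆ S := by
  have hreg := isRegular_succ hκ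
  obtain ⟨s, hs0, hs1⟩ : ∃ s : ℕ → Set V, s 0 = {x0} ∧ ∀ n, s (n+1) = ⋃ x ∈ s n, p x :=
    ⟨fun n => (fun T : Set V => ⋃ x ∈ T, p x)^[n] {x0}, rfl,
      fun n => Function.iterate_succ_apply' _ _ _⟩
  have hs : ∀ n, #(s n) < Order.succ κ := by
    intro n
    induction n with
    | zero =>
      rw [hs0, mk_singleton]
      exact one_lt_aleph0.trans_le hreg.aleph0_le
    | succ n ih =>
      rw [hs1]
      exact (card_biUnion_lt_iff_forall_of_isRegular (t := fun (a : V) (_ : a ∈ s n) => p a) hreg ih).2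
        (fun a _ => Order.lt_succ_of_le (hp a))
  refine ⟨⋃ n : ULift.{u} ℕ, s n.down, ?_, ?_, ?_⟩
  · exact Set.mem_iUnion.2 ⟨⟨0⟩, by rw [hs0]; rfl⟩
  · rw [← Order.lt_succ_iff]
    refine (card_iUnion_lt_iff_forall_of_isRegular hreg ?_).2 (fun n => hs _)
    exact (mk_le_aleph0).trans_lt (Order.lt_succ_of_le hκ)
  · intro x hx
    obtain ⟨n, hn⟩ := Set.mem_iUnion.1 hx
    intro z hz
    exact Set.mem_iUnion.2 ⟨⟨n.down + 1⟩, by rw [hs1]; exact Set.mem_biUnion hn hz⟩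

lemma main {V : Type u} (G : SimpleGraph V) {κ : Cardinal.{u}} (hκ : ℵ₀ ≤ κ) (hQ : Q κ)
    (d : V → Cardinal.{u}) (hd : ∀ v, ℵ₀ ≤ d v) (hdκ : ∀ v, d v ≤ κ)
    (hdeg : ∀ v, d v ≤ #(G.neighborSet v)) :
    ∃ f : V → Bool, ∀ x, d x ≤ #{y | G.Adj x y ∧ f y ≠ f x} := by
  classical
  obtain ⟨A, B, hAB, hg⟩ := exists_total G d (fun v => Or.inr (hd v)) hdeg (by
    rintro R ⟨x0, hx0⟩ hR
    have hp : ∀ x, ∃ p : Set V, p ⊆ R ∧ #p ≤ κ ∧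
        (x ∈ R → d x ≤ #(G.neighborSet x ∩ p : Set V)) := by
      intro x
      by_cases hx : x ∈ R
      · obtain ⟨p, hp, hpc⟩ := le_mk_iff_exists_subset.1 (hR x hx).2
        refine ⟨p, fun z hz => (hp hz).2, hpc ▸ hdκ x, fun _ => ?_⟩
        rw [← hpc]
        exact mk_le_mk_of_subset (fun z hz => ⟨(hp hz).1, hz⟩)
      · exact ⟨∅, Set.empty_subset _, by simp, fun h => absurd h hx⟩
    choose p hp1 hp2 hp3 using hp
    obtain ⟨S, h1, h2, h3⟩ := exists_small hκ p hp2 x0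
    obtain ⟨f, hf⟩ := hQ.sub G d (fun v => Or.inr (hd v)) (S ∩ R)
      ((mk_le_mk_of_subset Set.inter_subset_left).trans h2)
      (fun v hv => mono_inter (hp3 v hv.2) (Set.subset_inter (h3 v hv.1) (hp1 v)))
    have := good_of_col G d (S ∩ R) f hf
    exact ⟨_, _, Set.inter_subset_left.trans Set.inter_subset_right,
      Set.inter_subset_left.trans Set.inter_subset_right, by rw [this.2]; exact ⟨x0, h1, hx0⟩, this.1⟩)
  exact col_of_good G d A B hAB hg

end Unf

theorem stmt1 (n : ℕ) {V : Type u} (G : SimpleGraph V)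
    (hdeg : ∀ x : V, (G.neighborSet x).Infinite) :
    ∃ π : V → Fin 2, KUnfriendlyPartition G (Cardinal.aleph n) π := by
  have hinf : ∀ x, ℵ₀ ≤ #(G.neighborSet x) := fun x => by
    have := (hdeg x).to_subtype
    exact aleph0_le_mk _
  obtain ⟨f, hf⟩ := Unf.main G (aleph0_le_aleph n) (Unf.Q_aleph n)
    (fun x => min (Cardinal.aleph n) #(G.neighborSet x))
    (fun x => le_min (aleph0_le_aleph n) (hinf x)) (fun x => min_le_left _ _)
    (fun x => min_le_right _ _)
  refine ⟨fun v => if f v then 1 else 0, fun x => ?_⟩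
  have heq : {y | G.Adj x y ∧ f y ≠ f x} = {y : V | G.Adj x y ∧
      (if f y then (1 : Fin 2) else 0) ≠ (if f x then (1 : Fin 2) else 0)} := by
    ext y
    simp only [Set.mem_ofPred_eq]
    cases f y <;> cases f x <;> simp
  have h1 := hf x
  rw [heq] at h1
  rcases min_le_iff.1 h1 with h | h
  · exact Or.inl h
  · right
    exact (mk_le_mk_of_subset (s := {y : V | G.Adj x y ∧
      (if f y then (1 : Fin 2) else 0) = (if f x then (1 : Fin 2) else 0)})
      (t := G.neighborSet x) (fun y hy => hy.1)).trans h
end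

section
/- Let Γ=(G,𝒞) be a graph with conditions, where G=(V,E). Then there exists a family of finite conditions 𝒞'=(κ'_x,λ'_x)_{x∈V} on G with κ'_x = λ'_x = 0 for every vertex x of infinite degree, such that every ω-unfriendly partition of Γ'=(G,𝒞') is an ω-unfriendly partition of Γ. -/
open Cardinal

universe u

/-- `π` is a `μ`-unfriendly partition of the graph with conditions `(G, C)`:
for each vertex `x`, if `π x = 0` then `κ_x + |{neighbours of colour 0}|` is at most
`λ_x + |{neighbours of colour 1}|`, and symmetrically if `π x = 1`, except possibly
when the two compared cardinals are both `≥ μ`. -/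
def CondMuUnfriendly {V : Type u} (G : SimpleGraph V) (C : V → Cardinal.{u} × Cardinal.{u})
    (μ : Cardinal.{u}) (π : V → Fin 2) : Prop :=
  ∀ x : V,
    (π x = 0 →
      (C x).1 + #{y : V // G.Adj x y ∧ π y = 0} ≤ (C x).2 + #{y : V // G.Adj x y ∧ π y = 1} ∨
      (μ ≤ (C x).1 + #{y : V // G.Adj x y ∧ π y = 0} ∧
        μ ≤ (C x).2 + #{y : V // G.Adj x y ∧ π y = 1})) ∧
    (π x = 1 →
      (C x).2 + #{y : V // G.Adj x y ∧ π y = 1} ≤ (C x).1 + #{y : V // G.Adj x y ∧ π y = 0} ∨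
      (μ ≤ (C x).1 + #{y : V // G.Adj x y ∧ π y = 0} ∧
        μ ≤ (C x).2 + #{y : V // G.Adj x y ∧ π y = 1}))

theorem exists_finite_cond (k l d : Cardinal.{u}) : ∃ c : ℕ × ℕ, (ℵ₀ ≤ d → c = (0, 0)) ∧
    ∀ a b : Cardinal.{u}, a + b = d →
    (((c.1 : Cardinal.{u}) + a ≤ (c.2 : Cardinal.{u}) + b ∨
        (ℵ₀ ≤ (c.1 : Cardinal.{u}) + a ∧ ℵ₀ ≤ (c.2 : Cardinal.{u}) + b)) →
      (k + a ≤ l + b ∨ (ℵ₀ ≤ k + a ∧ ℵ₀ ≤ l + b))) ∧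
    (((c.2 : Cardinal.{u}) + b ≤ (c.1 : Cardinal.{u}) + a ∨
        (ℵ₀ ≤ (c.1 : Cardinal.{u}) + a ∧ ℵ₀ ≤ (c.2 : Cardinal.{u}) + b)) →
      (l + b ≤ k + a ∨ (ℵ₀ ≤ k + a ∧ ℵ₀ ≤ l + b))) := by
  by_cases hd : ℵ₀ ≤ d
  · refine ⟨(0, 0), fun _ => rfl, fun a b hab => ⟨fun h => ?_, fun h => ?_⟩⟩
    · simp only [Nat.cast_zero, zero_add] at h
      have hb : ℵ₀ ≤ b := by
        rcases h with h | h
        · by_contra hb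
          have hb := not_le.1 hb
          exact absurd (Cardinal.add_lt_aleph0 (h.trans_lt hb) hb) (by rw [hab]; exact not_lt.2 hd)
        · exact h.2
      have hb' : ℵ₀ ≤ l + b := hb.trans (self_le_add_left _ _)
      rcases le_total ℵ₀ (k + a) with h | h
      · exact Or.inr ⟨h, hb'⟩
      · exact Or.inl (h.trans hb')
    · simp only [Nat.cast_zero, zero_add] at h
      have ha : ℵ₀ ≤ a := by
        rcases h with h | h
        · by_contra ha
          have ha := not_le.1 ha
          exact absurd (Cardinal.add_lt_aleph0 ha (h.trans_lt ha)) (by rw [hab]; exact not_lt.2 hd)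
        · exact h.1
      have ha' : ℵ₀ ≤ k + a := ha.trans (self_le_add_left _ _)
      rcases le_total ℵ₀ (l + b) with h | h
      · exact Or.inr ⟨ha', h⟩
      · exact Or.inl (h.trans ha')
  · obtain ⟨n, rfl⟩ := Cardinal.lt_aleph0.1 (not_le.1 hd)
    have key : ∀ a b : Cardinal.{u}, a + b = n → ∃ p q : ℕ, a = p ∧ b = q ∧ p + q = n := by
      intro a b hab
      obtain ⟨p, rfl⟩ := Cardinal.lt_aleph0.1
        (((self_le_add_right a b).trans hab.le).trans_lt Cardinal.natCast_lt_aleph0)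
      obtain ⟨q, rfl⟩ := Cardinal.lt_aleph0.1
        (((self_le_add_left b _).trans hab.le).trans_lt Cardinal.natCast_lt_aleph0)
      exact ⟨p, q, rfl, rfl, by exact_mod_cast hab⟩
    have nlt : ∀ m : ℕ, ¬ (ℵ₀ ≤ (m : Cardinal.{u})) := fun m => not_le.2 Cardinal.natCast_lt_aleph0
    rcases le_or_gt ℵ₀ k with hk | hk <;> rcases le_or_gt ℵ₀ l with hl | hl
    · refine ⟨(0, 0), fun _ => rfl, fun a b hab => ?_⟩
      have h1 : ℵ₀ ≤ k + a := hk.trans (self_le_add_right _ _)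
      have h2 : ℵ₀ ≤ l + b := hl.trans (self_le_add_right _ _)
      exact ⟨fun _ => Or.inr ⟨h1, h2⟩, fun _ => Or.inr ⟨h1, h2⟩⟩
    · refine ⟨(n + 1, 0), fun h => absurd h hd, fun a b hab => ?_⟩
      obtain ⟨p, q, rfl, rfl, h⟩ := key a b hab
      obtain ⟨m, rfl⟩ := Cardinal.lt_aleph0.1 hl
      have h1 : ℵ₀ ≤ k + p := hk.trans (self_le_add_right _ _)
      refine ⟨fun h' => ?_, fun _ => Or.inl ?_⟩
      · exfalso
        rcases h' with h' | h'
        · have : n + 1 + p ≤ 0 + q := by exact_mod_cast h'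
          omega
        · exact nlt (0 + q) (by exact_mod_cast h'.2)
      · refine le_trans ?_ h1
        exact_mod_cast (Cardinal.natCast_lt_aleph0 (n := m + q)).le
    · refine ⟨(0, n + 1), fun h => absurd h hd, fun a b hab => ?_⟩
      obtain ⟨p, q, rfl, rfl, h⟩ := key a b hab
      obtain ⟨m, rfl⟩ := Cardinal.lt_aleph0.1 hk
      have h1 : ℵ₀ ≤ l + q := hl.trans (self_le_add_right _ _)
      refine ⟨fun _ => Or.inl ?_, fun h' => ?_⟩
      · refine le_trans ?_ h1
        exact_mod_cast (Cardinal.natCast_lt_aleph0 (n := m + p)).le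
      · exfalso
        rcases h' with h' | h'
        · have : n + 1 + q ≤ 0 + p := by exact_mod_cast h'
          omega
        · exact nlt (0 + p) (by exact_mod_cast h'.1)
    · obtain ⟨m, rfl⟩ := Cardinal.lt_aleph0.1 hk
      obtain ⟨m', rfl⟩ := Cardinal.lt_aleph0.1 hl
      exact ⟨(m, m'), fun h => absurd h hd, fun a b _ => ⟨id, id⟩⟩

theorem stmt2 {V : Type u} (G : SimpleGraph V) (C : V → Cardinal.{u} × Cardinal.{u}) :
    ∃ C' : V → ℕ × ℕ,
      (∀ x : V, (G.neighborSet x).Infinite → C' x = (0, 0)) ∧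
      ∀ π : V → Fin 2,
        CondMuUnfriendly G (fun x => (((C' x).1 : Cardinal.{u}), ((C' x).2 : Cardinal.{u}))) ℵ₀ π →
        CondMuUnfriendly G C ℵ₀ π := by
  choose C' h0 h1 using fun x => exists_finite_cond (C x).1 (C x).2 #(G.neighborSet x)
  refine ⟨C', fun x hx => h0 x (Cardinal.infinite_iff.1 hx.to_subtype), fun π hπ x => ?_⟩
  have hsum : #{y : V // G.Adj x y ∧ π y = 0} + #{y : V // G.Adj x y ∧ π y = 1}
      = #(G.neighborSet x) := by
    have hu : G.neighborSet x = {y | G.Adj x y ∧ π y = 0} ∪ {y | G.Adj x y ∧ π y = 1} := by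
      ext y
      have : π y = 0 ∨ π y = 1 := by omega
      simp only [SimpleGraph.mem_neighborSet, Set.mem_union, Set.mem_setOf_eq]
      tauto
    rw [hu, Cardinal.mk_union_of_disjoint]
    · rfl
    · rw [Set.disjoint_left]
      rintro y ⟨_, h⟩ ⟨_, h'⟩
      rw [h] at h'
      exact absurd h' (by decide)
  obtain ⟨ha, hb⟩ := h1 x _ _ hsum
  exact ⟨fun h => ha ((hπ x).1 h), fun h => hb ((hπ x).2 h)⟩
end

section
/- Let Γ=(G,𝒞) be a graph with conditions, G=(V,E). Suppose that every countable graph with finite conditions Δ=(H,𝒟), where H=(W,F) is an induced subgraph of G on a vertex set W with W ∩ 𝓘(G) = ∅, has an unfriendly partition. Then Γ has an ω-unfriendly partition. -/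
open Cardinal

universe u

/-- `𝓘(G)`: the largest subset `W` of the vertex set such that each element of `W` has
infinitely many neighbours in `W` (the union of all such subsets). -/
def calI {V : Type u} (G : SimpleGraph V) : Set V :=
  ⋃₀ {W : Set V | ∀ x ∈ W, (G.neighborSet x ∩ W).Infinite}

/-- `π` is an unfriendly partition of the graph with conditions `(G, C)`. -/
def CondUnfriendly {V : Type u} (G : SimpleGraph V) (C : V → Cardinal.{u} × Cardinal.{u})
    (π : V → Fin 2) : Prop :=
  ∀ x : V,
    (π x = 0 →
      (C x).1 + #{y : V // G.Adj x y ∧ π y = 0} ≤ (C x).2 + #{y : V // G.Adj x y ∧ π y = 1}) ∧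
    (π x = 1 →
      (C x).2 + #{y : V // G.Adj x y ∧ π y = 1} ≤ (C x).1 + #{y : V // G.Adj x y ∧ π y = 0})

namespace UnfAux

/-- Injective choice from a sequence of infinite sets. -/
theorem inj_choice {V : Type u} (A : ℕ → Set V) (hA : ∀ n, (A n).Infinite) :
    ∃ f : ℕ → V, Function.Injective f ∧ ∀ n, f n ∈ A n := by
  classical
  have h : ∀ n (l : Finset V), ∃ v, v ∈ A n ∧ v ∉ l := fun n l =>
    (hA n).exists_notMem_finset l
  choose p hp1 hp2 using h
  let g : ℕ → Finset V := fun n => Nat.rec ∅ (fun k s => insert (p k s) s) n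
  have gs : ∀ n, g (n+1) = insert (p n (g n)) (g n) := fun n => rfl
  have hmem : ∀ m n, m < n → p m (g m) ∈ g n := by
    intro m n hmn
    induction n with
    | zero => omega
    | succ k ih =>
      rw [gs, Finset.mem_insert]
      rcases Nat.lt_succ_iff_lt_or_eq.mp hmn with h | h
      · exact Or.inr (ih h)
      · subst h; exact Or.inl rfl
  refine ⟨fun n => p n (g n), ?_, fun n => hp1 _ _⟩
  intro m n hmn
  by_contra hne
  rcases lt_or_gt_of_ne hne with h | h
  · exact hp2 n (g n) ((show p m (g m) = p n (g n) from hmn) ▸ hmem m n h)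
  · exact hp2 m (g m) ((show p n (g n) = p m (g m) from hmn.symm) ▸ hmem n m h)

/-- Bicolouring: each of countably many infinite sets meets both colours infinitely often. -/
theorem bicolour {V : Type u} (W : Set V) (hW : W.Countable) (A : V → Set V)
    (hA : ∀ x ∈ W, (A x).Infinite) :
    ∃ c : V → Fin 2, ∀ x ∈ W, ∀ a : Fin 2, {y | y ∈ A x ∧ c y = a}.Infinite := by
  classical
  rcases W.eq_empty_or_nonempty with h | hne
  · exact ⟨fun _ => 0, by simp [h]⟩
  obtain ⟨e, he⟩ := hW.exists_eq_range hne
  have heW : ∀ n, e n ∈ W := fun n => by rw [he]; exact ⟨n, rfl⟩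
  -- code: n ↦ (index, (junk, colour))
  obtain ⟨f, hf, hfA⟩ := inj_choice (fun n => A (e n.unpair.1)) (fun n => hA _ (heW _))
  let c : V → Fin 2 := fun y => if ∃ k, f k = y ∧ k.unpair.2 % 2 = 1 then 1 else 0
  refine ⟨c, ?_⟩
  intro x hx a
  rw [he] at hx
  obtain ⟨i, rfl⟩ := hx
  have key : ∀ j : ℕ, f (Nat.pair i (2 * j + a.val)) ∈ {y | y ∈ A (e i) ∧ c y = a} := by
    intro j
    refine ⟨by simpa using hfA (Nat.pair i (2 * j + a.val)), ?_⟩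
    have : (∃ k, f k = f (Nat.pair i (2 * j + a.val)) ∧ k.unpair.2 % 2 = 1) ↔ a.val = 1 := by
      constructor
      · rintro ⟨k, hk, h⟩
        have := hf hk
        subst this
        simp at h
        have := a.2
        omega
      · intro h
        exact ⟨_, rfl, by simp [h]⟩
    simp only [c, this]
    fin_cases a <;> simp
  refine Set.infinite_of_injective_forall_mem (f := fun j : ℕ => f (Nat.pair i (2 * j + a.val)))
    ?_ key
  intro j k hjk
  have := hf hjk
  have := (Nat.pair_eq_pair.mp this).2
  omega

/-- Countable closure. -/
theorem exists_closure {V : Type u} (G : SimpleGraph V) (U : Set V) (x0 : V) (hx0 : x0 ∈ U) :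
    ∃ W : Set V, W ⊆ U ∧ W.Countable ∧ x0 ∈ W ∧
      (∀ x ∈ W, (G.neighborSet x ∩ U).Infinite → (G.neighborSet x ∩ W).Infinite) ∧
      (∀ x ∈ W, (G.neighborSet x ∩ U).Finite → G.neighborSet x ∩ U ⊆ W) := by
  classical
  have h : ∀ x, ∃ S : Set V, S ⊆ G.neighborSet x ∩ U ∧ S.Countable ∧
      ((G.neighborSet x ∩ U).Infinite → S.Infinite) ∧
      ((G.neighborSet x ∩ U).Finite → S = G.neighborSet x ∩ U) := by
    intro x
    by_cases hf : (G.neighborSet x ∩ U).Finite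
    · exact ⟨_, subset_rfl, hf.countable, fun h => h, fun _ => rfl⟩
    · let e := Set.Infinite.natEmbedding _ hf
      refine ⟨Set.range (fun n => (e n : V)), ?_, Set.countable_range _, ?_, fun h => absurd h hf⟩
      · rintro _ ⟨n, rfl⟩; exact (e n).2
      · intro _
        exact Set.infinite_range_of_injective (Subtype.val_injective.comp e.injective)
  choose S hS1 hS2 hS3 hS4 using h
  let g : ℕ → Set V := fun n => Nat.rec {x0} (fun _ s => ⋃ x ∈ s, S x) n
  have gs : ∀ n, g (n+1) = ⋃ x ∈ g n, S x := fun n => rfl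
  have gU : ∀ n, g n ⊆ U := by
    intro n
    cases n with
    | zero => exact Set.singleton_subset_iff.mpr hx0
    | succ k =>
      rw [gs]
      exact Set.iUnion₂_subset fun x _ => (hS1 x).trans Set.inter_subset_right
  have gC : ∀ n, (g n).Countable := by
    intro n
    induction n with
    | zero => exact Set.countable_singleton _
    | succ k ih => rw [gs]; exact ih.biUnion fun x _ => hS2 x
  have cl : ∀ x ∈ ⋃ n, g n, S x ⊆ ⋃ n, g n := by
    intro x hx y hy
    obtain ⟨n, hn⟩ := Set.mem_iUnion.mp hx
    refine Set.mem_iUnion.mpr ⟨n+1, ?_⟩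
    rw [gs]
    exact Set.mem_biUnion hn hy
  refine ⟨⋃ n, g n, Set.iUnion_subset gU, Set.countable_iUnion gC,
    Set.mem_iUnion.mpr ⟨0, rfl⟩, ?_, ?_⟩
  · intro x hx hi
    exact (hS3 x hi).mono fun y hy => ⟨(hS1 x hy).1, cl x hx hy⟩
  · intro x hx hf
    rw [← hS4 x hf]; exact cl x hx

section

variable {V : Type u} (G : SimpleGraph V) (C : V → Cardinal.{u} × Cardinal.{u})

def Nb (S : Set (V × Fin 2)) (x : V) (a : Fin 2) : Set V := {y | G.Adj x y ∧ (y, a) ∈ S}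

def Settled (S : Set (V × Fin 2)) (x : V) (a : Fin 2) : Prop :=
  (a = 1 ∧ ℵ₀ ≤ (C x).1) ∨ (a = 0 ∧ ℵ₀ ≤ (C x).2) ∨
  (Nb G S x (a + 1)).Infinite ∨
  ((∀ y, G.Adj x y → ∃ b, (y, b) ∈ S) ∧
    (a = 0 → (C x).1 + #(Nb G S x 0) ≤ (C x).2 + #(Nb G S x 1)) ∧
    (a = 1 → (C x).2 + #(Nb G S x 1) ≤ (C x).1 + #(Nb G S x 0)))

def Func (S : Set (V × Fin 2)) : Prop := ∀ x a b, (x, a) ∈ S → (x, b) ∈ S → a = b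

def Valid (S : Set (V × Fin 2)) : Prop :=
  Func S ∧ ∀ x a, (x, a) ∈ S → Settled G C S x a

variable {G C}

theorem Settled.mono {S T : Set (V × Fin 2)} (hST : S ⊆ T) (hT : Func T) {x : V} {a : Fin 2}
    (h : Settled G C S x a) : Settled G C T x a := by
  rcases h with h | h | h | ⟨h1, h2⟩
  · exact Or.inl h
  · exact Or.inr (Or.inl h)
  · exact Or.inr (Or.inr (Or.inl (h.mono fun y hy => ⟨hy.1, hST hy.2⟩)))
  · have e : ∀ b, Nb G S x b = Nb G T x b := by
      intro b
      ext y
      constructor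
      · exact fun hy => ⟨hy.1, hST hy.2⟩
      · rintro ⟨hy1, hy2⟩
        obtain ⟨d, hd⟩ := h1 y hy1
        have := hT y d b (hST hd) hy2
        subst this
        exact ⟨hy1, hd⟩
    rw [e, e] at h2
    exact Or.inr (Or.inr (Or.inr ⟨fun y hy => (h1 y hy).imp fun b hb => hST hb, h2⟩))

variable (G C)

theorem exists_max : ∃ S, Maximal (Valid G C) S := by
  refine zorn_subset {S | Valid G C S} ?_
  intro c hc hch
  have hF : Func (⋃₀ c) := by
    rintro x a b ⟨S, hS, ha⟩ ⟨T, hT, hb⟩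
    rcases hch.total hS hT with h | h
    · exact (hc hT).1 x a b (h ha) hb
    · exact (hc hS).1 x a b ha (h hb)
  refine ⟨⋃₀ c, ⟨hF, ?_⟩, fun s hs => Set.subset_sUnion_of_mem hs⟩
  rintro x a ⟨S, hS, ha⟩
  exact ((hc hS).2 x a ha).mono (Set.subset_sUnion_of_mem hS) hF

def ext (S : Set (V × Fin 2)) (W : Set V) (c : V → Fin 2) : Set (V × Fin 2) :=
  S ∪ {p | p.1 ∈ W ∧ c p.1 = p.2}

variable {G C}

theorem extend {S : Set (V × Fin 2)} (hS : Maximal (Valid G C) S) (W : Set V) (c : V → Fin 2)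
    (hd : ∀ x ∈ W, ∀ a, (x, a) ∉ S)
    (h : ∀ x ∈ W, Settled G C (ext S W c) x (c x)) : W = ∅ := by
  have hF : Func (ext S W c) := by
    rintro x a b (ha | ha) (hb | hb)
    · exact hS.1.1 x a b ha hb
    · exact absurd ha (hd x hb.1 a)
    · exact absurd hb (hd x ha.1 b)
    · exact ha.2.symm.trans hb.2
  have hV : Valid G C (ext S W c) := by
    refine ⟨hF, ?_⟩
    rintro x a (ha | ha)
    · exact (hS.1.2 x a ha).mono Set.subset_union_left hF
    · have := h x ha.1
      rwa [ha.2] at this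
  have hle := hS.2 hV Set.subset_union_left
  by_contra hne
  obtain ⟨x, hx⟩ := Set.nonempty_iff_ne_empty.mpr hne
  exact hd x hx (c x) (hle (Or.inr ⟨hx, rfl⟩))

theorem nb_ext (S : Set (V × Fin 2)) (W : Set V) (c : V → Fin 2)
    (hd : ∀ x ∈ W, ∀ a, (x, a) ∉ S) (π : W → Fin 2) (hc : ∀ x : W, c x = π x) (x : W)
    (a : Fin 2) :
    #(Nb G (ext S W c) x a) = #(Nb G S x a) + #{y : W // (G.induce W).Adj x y ∧ π y = a} := by
  have e : Nb G (ext S W c) x a =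
      Nb G S x a ∪ Set.image Subtype.val {y : W | (G.induce W).Adj x y ∧ π y = a} := by
    ext y
    constructor
    · rintro ⟨h1, h2 | h2⟩
      · exact Or.inl ⟨h1, h2⟩
      · exact Or.inr ⟨⟨y, h2.1⟩, ⟨h1, (hc ⟨y, h2.1⟩).symm.trans h2.2⟩, rfl⟩
    · rintro (h | ⟨z, ⟨h1, h2⟩, rfl⟩)
      · exact ⟨h.1, Or.inl h.2⟩
      · exact ⟨h1, Or.inr ⟨z.2, (hc z).trans h2⟩⟩
  rw [e, mk_union_of_disjoint, mk_image_eq Subtype.val_injective]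
  · rfl
  · rw [Set.disjoint_left]
    rintro y hy ⟨z, _, rfl⟩
    exact hd z z.2 a hy.2

theorem total (hyp : ∀ W : Set V, W.Countable → W ∩ calI G = ∅ →
      ∀ D : W → ℕ × ℕ, ∃ π : W → Fin 2,
        CondUnfriendly (G.induce W)
          (fun x => (((D x).1 : Cardinal.{u}), ((D x).2 : Cardinal.{u}))) π)
    {S : Set (V × Fin 2)} (hS : Maximal (Valid G C) S) (x : V) : ∃ a, (x, a) ∈ S := by
  classical
  by_contra hx
  have single : ∀ x a, (∀ b, (x, b) ∉ S) → ¬ Settled G C (ext S {x} fun _ => a) x a := by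
    intro x a hx hs
    have := extend hS {x} (fun _ => a) (by rintro y rfl; exact hx) (by rintro y rfl; exact hs)
    exact Set.singleton_ne_empty x this
  set U : Set V := {x | ∀ a, (x, a) ∉ S} with hU
  have hC1 : ∀ x ∈ U, (C x).1 < ℵ₀ := by
    intro x hx
    by_contra hn
    exact single x 1 hx (Or.inl ⟨rfl, not_lt.mp hn⟩)
  have hC2 : ∀ x ∈ U, (C x).2 < ℵ₀ := by
    intro x hx
    by_contra hn
    exact single x 0 hx (Or.inr (Or.inl ⟨rfl, not_lt.mp hn⟩))
  have hN : ∀ x ∈ U, ∀ a, (Nb G S x a).Finite := by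
    intro x hx a
    by_contra hn
    refine single x (a + 1) hx (Or.inr (Or.inr (Or.inl ?_)))
    have : a + 1 + 1 = a := by fin_cases a <;> rfl
    rw [this]
    exact Set.Infinite.mono (fun y hy => ⟨hy.1, Or.inl hy.2⟩) hn
  have hND : ∀ x ∈ U, (G.neighborSet x \ U).Finite := by
    intro x hx
    refine ((hN x hx 0).union (hN x hx 1)).subset ?_
    rintro y ⟨h1, h2⟩
    simp only [hU, Set.mem_setOf_eq, not_forall, not_not] at h2
    obtain ⟨a, ha⟩ := h2
    fin_cases a
    · exact Or.inl ⟨h1, ha⟩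
    · exact Or.inr ⟨h1, ha⟩
  have hxU : x ∈ U := fun a ha => hx ⟨a, ha⟩
  -- first: calI is coloured
  have hI : calI G ∩ U = ∅ := by
    by_contra hne
    obtain ⟨x0, hx0⟩ := Set.nonempty_iff_ne_empty.mpr hne
    obtain ⟨W, hWU, hWc, hxW, hinf, -⟩ := exists_closure G (calI G ∩ U) x0 hx0
    have hinfW : ∀ x ∈ W, (G.neighborSet x ∩ W).Infinite := by
      intro x hx
      apply hinf x hx
      obtain ⟨A, hA, hxA⟩ := (hWU hx).1
      have h1 : (G.neighborSet x ∩ calI G).Infinite :=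
        (hA x hxA).mono (Set.inter_subset_inter_right _ (Set.subset_sUnion_of_mem hA))
      refine (h1.diff (hND x (hWU hx).2)).mono ?_
      rintro y ⟨⟨h1, h2⟩, h3⟩
      refine ⟨h1, h2, ?_⟩
      by_contra h4
      exact h3 ⟨h1, h4⟩
    obtain ⟨c, hc⟩ := bicolour W hWc (fun x => G.neighborSet x ∩ W) hinfW
    have := extend hS W c (fun x hx => (hWU hx).2) (fun x hx => by
      refine Or.inr (Or.inr (Or.inl ((hc x hx (c x + 1)).mono ?_)))
      rintro y ⟨⟨h1, h2⟩, h3⟩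
      exact ⟨h1, Or.inr ⟨h2, h3⟩⟩)
    rw [this] at hxW
    exact hxW
  obtain ⟨W, hWU, hWc, hxW, hinf, hfin⟩ := exists_closure G U x hxU
  obtain ⟨π, hπ⟩ := hyp W hWc (by
      rw [← Set.subset_empty_iff, ← hI]
      exact fun y hy => ⟨hy.2, hWU hy.1⟩)
    (fun x => (toNat ((C x).1 + #(Nb G S x 0)), toNat ((C x).2 + #(Nb G S x 1))))
  let c : V → Fin 2 := fun y => if h : y ∈ W then π ⟨y, h⟩ else 0
  have hc : ∀ y : W, c y = π y := fun y => by simp [c]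
  have hd : ∀ x ∈ W, ∀ a, (x, a) ∉ S := fun x hx => hWU hx
  have := extend hS W c hd (by
    intro x hx
    have hlt1 : (C x).1 + #(Nb G S x 0) < ℵ₀ :=
      add_lt_aleph0 (hC1 x (hWU hx)) (lt_aleph0_iff_set_finite.mpr (hN x (hWU hx) 0))
    have hlt2 : (C x).2 + #(Nb G S x 1) < ℵ₀ :=
      add_lt_aleph0 (hC2 x (hWU hx)) (lt_aleph0_iff_set_finite.mpr (hN x (hWU hx) 1))
    have hp := hπ ⟨x, hx⟩
    simp only [cast_toNat_of_lt_aleph0 hlt1, cast_toNat_of_lt_aleph0 hlt2] at hp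
    have hcx : c x = π ⟨x, hx⟩ := hc ⟨x, hx⟩
    have e0 := nb_ext (G := G) S W c hd π hc ⟨x, hx⟩ 0
    have e1 := nb_ext (G := G) S W c hd π hc ⟨x, hx⟩ 1
    simp only at e0 e1
    rw [add_assoc, add_assoc, ← e0, ← e1, ← hcx] at hp
    by_cases hf : (G.neighborSet x ∩ U).Finite
    · refine Or.inr (Or.inr (Or.inr ⟨?_, hp.1, hp.2⟩))
      intro y hy
      by_cases hyU : y ∈ U
      · exact ⟨c y, Or.inr ⟨hfin x hx hf ⟨hy, hyU⟩, rfl⟩⟩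
      · simp only [hU, Set.mem_setOf_eq, not_forall, not_not] at hyU
        exact hyU.imp fun a ha => Or.inl ha
    · refine Or.inr (Or.inr (Or.inl ?_))
      have hWi := hinf x hx hf
      intro hfo
      have hcov : G.neighborSet x ∩ W ⊆ Nb G (ext S W c) x 0 ∪ Nb G (ext S W c) x 1 := by
        rintro y ⟨h1, h2⟩
        rcases (show c y = 0 ∨ c y = 1 by generalize c y = t; fin_cases t <;> simp) with h | h
        · exact Or.inl ⟨h1, Or.inr ⟨h2, h⟩⟩
        · exact Or.inr ⟨h1, Or.inr ⟨h2, h⟩⟩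
      have hsame : ∀ A B : Cardinal.{u}, ∀ P Q : Set V, A + #P ≤ B + #Q → B < ℵ₀ → Q.Finite →
          P.Finite := by
        intro A B P Q h hB hQ
        refine lt_aleph0_iff_set_finite.mp ((le_add_self.trans h).trans_lt ?_)
        exact add_lt_aleph0 hB (lt_aleph0_iff_set_finite.mpr hQ)
      rcases (show c x = 0 ∨ c x = 1 by generalize c x = t; fin_cases t <;> simp) with h | h
      · rw [h] at hfo
        have := hsame _ _ _ _ (hp.1 h) (hC2 x (hWU hx)) hfo
        exact hWi ((this.union hfo).subset hcov)
      · rw [h] at hfo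
        have := hsame _ _ _ _ (hp.2 h) (hC1 x (hWU hx)) hfo
        exact hWi ((hfo.union this).subset hcov))
  rw [this] at hxW
  exact hxW

end

end UnfAux

theorem stmt3 {V : Type u} (G : SimpleGraph V) (C : V → Cardinal.{u} × Cardinal.{u})
    (hyp : ∀ W : Set V, W.Countable → W ∩ calI G = ∅ →
      ∀ D : W → ℕ × ℕ, ∃ π : W → Fin 2,
        CondUnfriendly (G.induce W)
          (fun x => (((D x).1 : Cardinal.{u}), ((D x).2 : Cardinal.{u}))) π) :
    ∃ π : V → Fin 2, CondMuUnfriendly G C ℵ₀ π := by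
  classical
  obtain ⟨S, hS⟩ := UnfAux.exists_max G C
  choose π hπ using UnfAux.total hyp hS
  have hiff : ∀ y a, (y, a) ∈ S ↔ π y = a := fun y a =>
    ⟨fun h => hS.1.1 y _ _ (hπ y) h, fun h => h ▸ hπ y⟩
  have hNb : ∀ x a, #{y : V // G.Adj x y ∧ π y = a} = #(UnfAux.Nb G S x a) := by
    intro x a
    have : UnfAux.Nb G S x a = {y | G.Adj x y ∧ π y = a} := by
      ext y; simp [UnfAux.Nb, hiff]
    rw [this]; rfl
  refine ⟨π, fun x => ?_⟩
  have hs := hS.1.2 x (π x) (hπ x)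
  rw [hNb, hNb]
  have aux : ∀ A B : Cardinal.{u}, ℵ₀ ≤ B → A ≤ B ∨ (ℵ₀ ≤ A ∧ ℵ₀ ≤ B) := by
    intro A B hB
    rcases lt_or_ge A ℵ₀ with h | h
    · exact Or.inl (h.le.trans hB)
    · exact Or.inr ⟨h, hB⟩
  constructor
  · intro h0
    rw [h0] at hs
    rcases hs with h | h | h | h
    · simp at h
    · exact aux _ _ (h.2.trans le_self_add)
    · refine aux _ _ ((?_ : ℵ₀ ≤ #(UnfAux.Nb G S x 1)).trans le_add_self)
      exact infinite_iff.mp h.to_subtype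
    · exact Or.inl (h.2.1 rfl)
  · intro h1
    rw [h1] at hs
    rcases hs with h | h | h | h
    · exact (aux _ _ (h.2.trans le_self_add)).imp id And.symm
    · simp at h
    · refine (aux _ _ ((?_ : ℵ₀ ≤ #(UnfAux.Nb G S x 0)).trans le_add_self)).imp id And.symm
      exact infinite_iff.mp h.to_subtype
    · exact Or.inl (h.2.2 rfl)
end

section
/- The following four properties are equivalent: (1) every graph with conditions has an ω-unfriendly partition; (2) every graph has an ω-unfriendly partition; (3) every countable graph has an unfriendly partition; (4) every countable graph having no nonempty induced subgraph in which every vertex has infinite degree has an unfriendly partition. -/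
open Cardinal

universe u

/-- The number (in `ℕ∞`) of neighbours of `x` of colour `c`. -/
noncomputable def nbc {V : Type*} (G : SimpleGraph V) (π : V → Fin 2) (x : V) (c : Fin 2) : ℕ∞ :=
  {y : V | G.Adj x y ∧ π y = c}.encard

/-- The `ℕ∞`-valued form of the `ω`-unfriendliness with conditions. -/
def GoodP {V : Type*} (G : SimpleGraph V) (K : V → Fin 2 → ℕ∞) (π : V → Fin 2) : Prop :=
  ∀ x, K x (π x) + nbc G π x (π x) ≤ K x (π x + 1) + nbc G π x (π x + 1)

lemma toENat_le_iff_or (a b : Cardinal.{u}) :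
    toENat a ≤ toENat b ↔ (a ≤ b ∨ (ℵ₀ ≤ a ∧ ℵ₀ ≤ b)) := by
  rcases lt_or_ge b ℵ₀ with h | h
  · rw [Cardinal.toENat_le_iff_of_lt_aleph0 h]
    exact ⟨Or.inl, fun h' => h'.elim id fun h2 => absurd h2.2 (not_le.2 h)⟩
  · simp only [toENat_eq_top.2 h, le_top, true_iff, h, and_true]
    exact (le_total a ℵ₀).imp (fun h' => h'.trans h) id

lemma fin2_ne {a b : Fin 2} : a ≠ b ↔ a = b + 1 := by
  revert a b; decide

lemma toENat_nbc {V : Type u} (G : SimpleGraph V) (π : V → Fin 2) (x : V) (c : Fin 2) :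
    toENat #{y : V // G.Adj x y ∧ π y = c} = nbc G π x c :=
  Set.toENat_cardinalMk {y : V | G.Adj x y ∧ π y = c}

lemma cond_of_good {V : Type u} (G : SimpleGraph V) (C : V → Cardinal.{u} × Cardinal.{u})
    (π : V → Fin 2)
    (h : GoodP G (fun x c => if c = 0 then toENat (C x).1 else toENat (C x).2) π) :
    CondMuUnfriendly G C ℵ₀ π := by
  intro x
  have hx := h x
  constructor
  · intro h0
    rw [h0] at hx
    simp only [if_true, zero_add, one_ne_zero, if_false] at hx
    rw [← toENat_nbc, ← toENat_nbc, ← map_add, ← map_add, toENat_le_iff_or] at hx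
    exact hx
  · intro h0
    rw [h0] at hx
    have h11 : (1 + 1 : Fin 2) = 0 := rfl
    simp only [if_true, h11, one_ne_zero, if_false] at hx
    rw [← toENat_nbc, ← toENat_nbc, ← map_add, ← map_add, toENat_le_iff_or] at hx
    exact hx.imp id And.symm

lemma unfriendly_nbc {V : Type u} (G : SimpleGraph V) (π : V → Fin 2)
    (h : UnfriendlyPartition G π) (x : V) :
    nbc G π x (π x) ≤ nbc G π x (π x + 1) := by
  have hx := h x
  simp only [fin2_ne] at hx
  rw [← toENat_nbc, ← toENat_nbc]
  exact OrderHomClass.mono toENat hx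

lemma glue {V : Type u} (G : SimpleGraph V) (K : V → Fin 2 → ℕ∞) {ι : Type*} [LinearOrder ι]
    [WellFoundedLT ι] (r : V → ι)
    (h : ∀ i (K' : {v | r v = i} → Fin 2 → ℕ∞), ∃ π, GoodP (G.induce {v | r v = i}) K' π)
    (hr : ∀ y, (∀ z, G.Adj y z → r z ≤ r y) ∨ {z | G.Adj y z ∧ r z ≤ r y}.Infinite) :
    ∃ π, GoodP G K π := by
  classical
  choose P hP using h
  let F : (i : ι) → ((j : ι) → j < i → ({v | r v = j} → Fin 2)) → ({v | r v = i} → Fin 2) :=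
    fun i prev => P i (fun x c => K x c +
      {y | G.Adj x y ∧ ∃ hlt : r y < i, prev (r y) hlt ⟨y, rfl⟩ = c}.encard)
  let wf : WellFounded ((· < ·) : ι → ι → Prop) := wellFounded_lt
  let Q := wf.fix F
  let π : V → Fin 2 := fun v => Q (r v) ⟨v, rfl⟩
  have hQ : ∀ i (v : {v | r v = i}), Q i v = π v := by
    rintro i ⟨v, rfl⟩; rfl
  have key : ∀ x : V, K x (π x) + {z | (G.Adj x z ∧ r z ≤ r x) ∧ π z = π x}.encard ≤
      K x (π x + 1) + {z | (G.Adj x z ∧ r z ≤ r x) ∧ π z = π x + 1}.encard := by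
    intro x
    have h1 := hP (r x) (fun x' c => K x' c +
      {y | G.Adj x' y ∧ ∃ hlt : r y < r x, Q (r y) ⟨y, rfl⟩ = c}.encard) ⟨x, rfl⟩
    have hq : P (r x) (fun x' c => K x' c +
      {y | G.Adj x' y ∧ ∃ hlt : r y < r x, Q (r y) ⟨y, rfl⟩ = c}.encard) = Q (r x) :=
      (wf.fix_eq F (r x)).symm
    rw [hq] at h1
    have h2 : ∀ c, {y : V | G.Adj x y ∧ ∃ hlt : r y < r x, Q (r y) ⟨y, rfl⟩ = c}.encard +
        nbc (G.induce {v | r v = r x}) (Q (r x)) ⟨x, rfl⟩ c =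
        {z | (G.Adj x z ∧ r z ≤ r x) ∧ π z = c}.encard := by
      intro c
      unfold nbc
      rw [← Subtype.val_injective.encard_image, ← Set.encard_union_eq]
      · congr 1
        ext z
        constructor
        · rintro (⟨a, b, e⟩ | ⟨⟨z', hz'⟩, ⟨a, e⟩, rfl⟩)
          · exact ⟨⟨a, b.le⟩, e⟩
          · exact ⟨⟨a, le_of_eq hz'⟩, (hQ _ _).symm.trans e⟩
        · rintro ⟨⟨a, b⟩, e⟩
          rcases b.lt_or_eq with b | b
          · exact Or.inl ⟨a, b, e⟩
          · exact Or.inr ⟨⟨z, b⟩, ⟨a, (hQ _ _).trans e⟩, rfl⟩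
      · rw [Set.disjoint_left]
        rintro z ⟨_, hz, _⟩ ⟨⟨z', hz'⟩, _, rfl⟩
        exact hz.ne hz'
    simp only [add_assoc, h2] at h1
    exact h1
  refine ⟨π, fun x => ?_⟩
  rcases hr x with hx | hx
  · have : ∀ c, {z | (G.Adj x z ∧ r z ≤ r x) ∧ π z = c}.encard = nbc G π x c := by
      intro c
      unfold nbc
      congr 1
      ext z
      exact ⟨fun h => ⟨h.1.1, h.2⟩, fun h => ⟨⟨h.1, hx z h.1⟩, h.2⟩⟩
    have hk := key x
    rw [this, this] at hk
    exact hk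
  · have hk := key x
    have hU : {z | (G.Adj x z ∧ r z ≤ r x) ∧ π z = π x} ∪
        {z | (G.Adj x z ∧ r z ≤ r x) ∧ π z = π x + 1} = {z | G.Adj x z ∧ r z ≤ r x} := by
      ext z
      have : π z = π x ∨ π z = π x + 1 := by
        rw [← fin2_ne]; exact em _
      simp only [Set.mem_union, Set.mem_ofPred_eq, ← and_or_left, this, and_true]
    have ht : K x (π x + 1) + {z | (G.Adj x z ∧ r z ≤ r x) ∧ π z = π x + 1}.encard = ⊤ := by
      rw [← hU, Set.infinite_union] at hx
      rcases hx with hx | hx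
      · rw [hx.encard_eq, add_top] at hk
        exact top_le_iff.1 hk
      · rw [hx.encard_eq, add_top]
    have hm : {z | (G.Adj x z ∧ r z ≤ r x) ∧ π z = π x + 1}.encard ≤ nbc G π x (π x + 1) :=
      Set.encard_le_encard fun z hz => ⟨hz.1.1, hz.2⟩
    exact le_top.trans (ht.symm.le.trans (by gcongr))

lemma block_reduction {V : Type u} (G : SimpleGraph V) (K : V → Fin 2 → ℕ∞)
    (h : ∀ (U : Type u) (H : SimpleGraph U) (K' : U → Fin 2 → ℕ∞), Countable U →
      ∃ π, GoodP H K' π) :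
    ∃ π, GoodP G K π := by
  classical
  have hS : ∀ y : V, ∃ S : Set V, S.Countable ∧ S ⊆ {z | G.Adj y z} ∧
      ({z | G.Adj y z} ⊆ S ∨ S.Infinite) := by
    intro y
    by_cases hc : {z | G.Adj y z}.Countable
    · exact ⟨_, hc, subset_rfl, Or.inl subset_rfl⟩
    · have hi : {z | G.Adj y z}.Infinite := fun hf => hc hf.countable
      refine ⟨Set.range (fun n => (hi.natEmbedding _ n : V)), Set.countable_range _, ?_, Or.inr ?_⟩
      · rintro _ ⟨n, rfl⟩
        exact (hi.natEmbedding _ n).2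
      · exact Set.infinite_range_of_injective
          (Subtype.val_injective.comp (hi.natEmbedding _).injective)
  choose S hSc hSs hSi using hS
  let T : V → ℕ → Set V := fun x n => Nat.rec {x} (fun _ A => ⋃ y ∈ A, S y) n
  have hT1 : ∀ x n, T x (n + 1) = ⋃ y ∈ T x n, S y := fun _ _ => rfl
  have hTc : ∀ x n, (T x n).Countable := by
    intro x n
    induction n with
    | zero => exact Set.countable_singleton x
    | succ n ih =>
      rw [hT1]
      exact ih.biUnion fun y _ => hSc y
  let cl : V → Set V := fun x => ⋃ n, T x n
  have hclc : ∀ x, (cl x).Countable := fun x => Set.countable_iUnion (hTc x)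
  have hself : ∀ x, x ∈ cl x := fun x => Set.mem_iUnion.2 ⟨0, rfl⟩
  have hcl : ∀ x y, y ∈ cl x → S y ⊆ cl x := by
    intro x y hy z hz
    obtain ⟨n, hn⟩ := Set.mem_iUnion.1 hy
    refine Set.mem_iUnion.2 ⟨n + 1, ?_⟩
    rw [hT1]
    exact Set.mem_biUnion hn hz
  obtain ⟨_, _⟩ := exists_wellFoundedLT V
  let wf : WellFounded ((· < ·) : V → V → Prop) := wellFounded_lt
  let r : V → V := fun y => wf.min {x | y ∈ cl x} ⟨y, hself y⟩
  have hrm : ∀ y, y ∈ cl (r y) := fun y => wf.min_mem {x | y ∈ cl x} ⟨y, hself y⟩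
  have hrl : ∀ y x, y ∈ cl x → r y ≤ x := fun y x hx =>
    not_lt.1 (wf.not_lt_min {x | y ∈ cl x} hx)
  refine glue G K r (fun i K' => h _ _ K' ?_) ?_
  · refine Set.Countable.to_subtype ((hclc i).mono ?_)
    rintro v rfl
    exact hrm v
  · intro y
    have hle : ∀ z ∈ S y, r z ≤ r y := fun z hz => hrl z _ (hcl _ _ (hrm y) hz)
    rcases hSi y with h1 | h1
    · exact Or.inl fun z hz => hle z (h1 hz)
    · exact Or.inr (h1.mono fun z hz => ⟨hSs y hz, hle z hz⟩)

lemma inf_degree {V : Type u} [Countable V] (G : SimpleGraph V) (K : V → Fin 2 → ℕ∞)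
    (h : ∀ x, {y | G.Adj x y}.Infinite) : ∃ π, GoodP G K π := by
  classical
  rcases isEmpty_or_nonempty V with hV | hV
  · exact ⟨fun _ => 0, fun x => hV.elim x⟩
  obtain ⟨t, ht⟩ := exists_surjective_nat (V × Fin 2 × ℕ)
  have hg : ∀ (A : Finset V) (n : ℕ), ∃ y, G.Adj (t n).1 y ∧ y ∉ A := by
    intro A n
    obtain ⟨y, hy, hyA⟩ := (h (t n).1).exists_notMem_finset A
    exact ⟨y, hy, hyA⟩
  choose g hg1 hg2 using hg
  let A : ℕ → Finset V := fun n => Nat.rec ∅ (fun n B => insert (g B n) B) n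
  have hA : ∀ n, A (n + 1) = insert (g (A n) n) (A n) := fun _ => rfl
  have hAm : Monotone A := monotone_nat_of_le_succ fun n => by
    rw [hA]; exact Finset.subset_insert _ _
  let f : ℕ → V := fun n => g (A n) n
  have hlt : ∀ m n, m < n → f m ≠ f n := by
    intro m n hmn he
    have h1 : f m ∈ A (m + 1) := by rw [hA]; exact Finset.mem_insert_self _ _
    have h2 : f m ∈ A n := hAm hmn h1
    rw [he] at h2
    exact hg2 _ _ h2
  have hf : Function.Injective f := by
    intro m n he
    rcases lt_trichotomy m n with hh | hh | hh
    · exact absurd he (hlt _ _ hh)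
    · exact hh
    · exact absurd he.symm (hlt _ _ hh)
  let π : V → Fin 2 := fun v => (t (Function.invFun f v)).2.1
  have hπ : ∀ n, π (f n) = (t n).2.1 := by
    intro n
    simp only [π, Function.leftInverse_invFun hf n]
  refine ⟨π, fun x => ?_⟩
  have hinf : ∀ c, nbc G π x c = ⊤ := by
    intro c
    choose s hs using fun k => ht (x, c, k)
    have hsi : Function.Injective s := by
      intro a b hab
      have := hs a
      rw [hab, hs b] at this
      simpa using this.symm
    refine Set.Infinite.encard_eq ((Set.infinite_range_of_injective (hf.comp hsi)).mono ?_)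
    rintro _ ⟨k, rfl⟩
    constructor
    · have := hg1 (A (s k)) (s k)
      rw [hs k] at this
      exact this
    · simp only [Function.comp, hπ, hs k]
  rw [hinf, hinf, add_top, add_top]

lemma countable_reduction {V : Type u} [Countable V] (G : SimpleGraph V) (K : V → Fin 2 → ℕ∞)
    (h : ∀ (U : Type u) (H : SimpleGraph U) (K' : U → Fin 2 → ℕ∞), Countable U →
      (∀ W : Set U, (∀ x ∈ W, (H.neighborSet x ∩ W).Infinite) → W = ∅) →
      ∃ π, GoodP H K' π) :
    ∃ π, GoodP G K π := by
  classical
  let M : Set V := ⋃₀ {W | ∀ x ∈ W, (G.neighborSet x ∩ W).Infinite}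
  have hM : ∀ x ∈ M, (G.neighborSet x ∩ M).Infinite := by
    rintro x ⟨W, hW, hx⟩
    exact (hW x hx).mono (Set.inter_subset_inter_right _ (Set.subset_sUnion_of_mem hW))
  let r : V → ℕ := fun v => if v ∈ M then 0 else 1
  have hr0 : ∀ v, r v = 0 ↔ v ∈ M := by
    intro v; by_cases hv : v ∈ M <;> simp [r, hv]
  have hr1 : ∀ v, r v ≤ 1 := by
    intro v; by_cases hv : v ∈ M <;> simp [r, hv]
  refine glue G K r ?_ ?_
  · intro i K'
    by_cases hi : i = 0
    · subst hi
      apply inf_degree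
      rintro ⟨x, hx⟩
      have hx' := hM x ((hr0 x).1 hx)
      rw [← Set.infinite_image_iff (Subtype.val_injective.injOn)]
      refine hx'.mono ?_
      rintro y ⟨hy, hyM⟩
      exact ⟨⟨y, (hr0 y).2 hyM⟩, hy, rfl⟩
    · apply h _ _ _ inferInstance
      intro W hW
      by_contra hne
      obtain ⟨⟨x, hx⟩, hxW⟩ := Set.nonempty_iff_ne_empty.2 hne
      have : x ∈ M := by
        refine ⟨Subtype.val '' W, ?_, ⟨_, hxW, rfl⟩⟩
        rintro _ ⟨y, hy, rfl⟩
        refine ((hW y hy).image Subtype.val_injective.injOn).mono ?_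
        rintro _ ⟨z, ⟨hz1, hz2⟩, rfl⟩
        exact ⟨hz1, ⟨z, hz2, rfl⟩⟩
      exact hi (hx.symm.trans ((hr0 x).2 this))
  · intro y
    by_cases hy : y ∈ M
    · right
      refine (hM y hy).mono ?_
      rintro z ⟨hz, hzM⟩
      exact ⟨hz, by rw [(hr0 z).2 hzM]; exact Nat.zero_le _⟩
    · left
      intro z _
      have : r y = 1 := by simp [r, hy]
      rw [this]
      exact hr1 z

lemma layers (σ : ℕ → ℕ → ℤ) (hσ : ∀ m i, σ m i = 1 ∨ σ m i = -1) (d : ℕ → ℤ)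
    (hd : ∀ m, d m = ∑ i ∈ Finset.range (5 * m / 2), σ m i)
    (h : ∀ m i, 1 ≤ m → i < 5 * m / 2 → ∃ e : ℤ, -1 ≤ e ∧ e ≤ 1 ∧ (i ≠ 0 → e = 0) ∧
      σ m i * (d (m - 1) + d (m + 1) + e) ≤ 0) :
    ∀ m, 1 ≤ m → σ (m + 1) 0 = - σ m 0 := by
  have aux : ∀ m n, ∃ k : ℤ, ∑ i ∈ Finset.range n, σ m i = n - 2 * k ∧ 0 ≤ k ∧ k ≤ n := by
    intro m n
    induction n with
    | zero => exact ⟨0, by simp⟩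
    | succ n ih =>
      obtain ⟨k, h1, h2, h3⟩ := ih
      rw [Finset.sum_range_succ, h1]
      rcases hσ m n with h | h <;> rw [h]
      · exact ⟨k, by push_cast; ring, h2, by push_cast; omega⟩
      · exact ⟨k + 1, by push_cast; ring, by omega, by push_cast; omega⟩
  have hconst : ∀ m i, 1 ≤ m → 1 ≤ i → i < 5 * m / 2 → σ m i = σ m 1 := by
    intro m i hm hi him
    obtain ⟨e, -, -, he, h1⟩ := h m i hm him
    obtain ⟨e', -, -, he', h1'⟩ := h m 1 hm (by omega)
    rw [he (by omega)] at h1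
    rw [he' (by omega)] at h1'
    obtain ⟨k, hk, -, -⟩ := aux (m - 1) (5 * (m - 1) / 2)
    obtain ⟨l, hl, -, -⟩ := aux (m + 1) (5 * (m + 1) / 2)
    have hs : 5 * (m + 1) / 2 = 5 * (m - 1) / 2 + 5 := by omega
    rw [hd (m - 1), hd (m + 1), hk, hl, hs] at h1 h1'
    clear hk hl hs
    generalize 5 * (m - 1) / 2 = s at h1 h1'
    rcases hσ m i with a | a <;> rcases hσ m 1 with b | b <;> rw [a] at h1 ⊢ <;>
      rw [b] at h1' ⊢ <;> omega
  have hdm : ∀ m, 1 ≤ m → d m = σ m 0 + (((5 * m / 2 - 1 : ℕ)) : ℤ) * σ m 1 := by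
    intro m hm
    rw [hd]
    obtain ⟨s, hs⟩ : ∃ s, 5 * m / 2 = s + 1 := ⟨5 * m / 2 - 1, by omega⟩
    rw [hs, Finset.sum_range_succ', add_comm]
    congr 1
    rw [Finset.sum_congr rfl (g := fun _ => σ m 1)]
    · simp
    · intro i hi
      rw [Finset.mem_range] at hi
      exact hconst m (i + 1) hm (by omega) (by omega)
  have hall : ∀ m i, 1 ≤ m → i < 5 * m / 2 → σ m i = - σ (m + 1) 1 := by
    intro m i hm him
    obtain ⟨e, he1, he2, -, h1⟩ := h m i hm him
    obtain ⟨k, hk, hk1, hk2⟩ := aux (m - 1) (5 * (m - 1) / 2)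
    rw [hdm (m + 1) (by omega), hd (m - 1), hk] at h1
    rcases hσ m i with a | a <;> rcases hσ (m + 1) 1 with b | b <;>
      rcases hσ (m + 1) 0 with c | c <;> rw [a, b, c] at h1 <;> rw [a, b] <;> omega
  intro m hm
  have h0 := hall m 0 hm (by omega)
  have h1 := hall (m + 1) 0 (by omega) (by omega)
  have h2 := hall (m + 1) 1 (by omega) (by omega)
  rw [h0, h1, h2, neg_neg]

/-- Signs attached to colours. -/
def sg (c : Fin 2) : ℤ := if c = 0 then 1 else -1

lemma sg_cases (c : Fin 2) : sg c = 1 ∨ sg c = -1 := by revert c; decide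

lemma sg_mul (c d : Fin 2) : sg c * sg d = if d = c then 1 else -1 := by revert c d; decide

lemma sg_neg {c d : Fin 2} (h : sg c = - sg d) : c = d + 1 := by revert c d; decide

lemma sum_sg {U : Type*} [DecidableEq U] (H : SimpleGraph U) (π : U → Fin 2) (v : U)
    (N : Finset U) (hN : ∀ y, H.Adj v y ↔ y ∈ N)
    (h : nbc H π v (π v) ≤ nbc H π v (π v + 1)) :
    sg (π v) * ∑ y ∈ N, sg (π y) ≤ 0 := by
  have hc : ∀ c, nbc H π v c = ((N.filter fun y => π y = c).card : ℕ∞) := by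
    intro c
    rw [← Set.encard_coe_eq_coe_finsetCard]
    unfold nbc
    congr 1
    ext y
    simp [hN]
  rw [hc, hc, Nat.cast_le] at h
  rw [Finset.mul_sum]
  simp only [sg_mul]
  rw [Finset.sum_ite, Finset.sum_const, Finset.sum_const]
  have : N.filter (fun y => ¬ π y = π v) = N.filter (fun y => π y = π v + 1) := by
    ext y; simp only [Finset.mem_filter, ← fin2_ne, ne_eq]
  rw [this]
  simp only [nsmul_eq_mul, mul_one, mul_neg]
  have : ((N.filter fun y => π y = π v).card : ℤ) ≤ (N.filter fun y => π y = π v + 1).card := by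
    exact_mod_cast h
  linarith

lemma encard_lt (K : ℕ∞) : {k : ℕ | (k : ℕ∞) < K}.encard = K := by
  induction K using ENat.recTopCoe with
  | top =>
    have : {k : ℕ | (k : ℕ∞) < ⊤} = Set.univ := by ext k; simp
    rw [this, Set.infinite_univ.encard_eq]
  | coe n =>
    have : {k : ℕ | (k : ℕ∞) < n} = ((Finset.range n : Finset ℕ) : Set ℕ) := by ext k; simp
    rw [this, Set.encard_coe_eq_coe_finsetCard, Finset.card_range]

/-- The relation between an original vertex and a gadget vertex. -/
def ExtRel {V : Type*} [Encodable V] (K : V → Fin 2 → ℕ∞) (x : V) (q : ℕ × ℕ) : Prop :=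
  ∃ (c : Fin 2) (k : ℕ), (k : ℕ∞) < K x c ∧ q = (2 * Encodable.encode (x, k) + c.val + 1, 0)

/-- Adjacency of the gadget. -/
def LayRel (p q : ℕ × ℕ) : Prop :=
  (p.1 = q.1 + 1 ∨ q.1 = p.1 + 1) ∧ p.2 < 5 * p.1 / 2 ∧ q.2 < 5 * q.1 / 2

/-- Auxiliary graph: the original graph together with a reference gadget. -/
def auxGraph {V : Type u} [Encodable V] (G : SimpleGraph V) (K : V → Fin 2 → ℕ∞) :
    SimpleGraph (V ⊕ (ℕ × ℕ)) where
  Adj a b := match a, b with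
    | .inl x, .inl y => G.Adj x y
    | .inl x, .inr q => ExtRel K x q
    | .inr q, .inl x => ExtRel K x q
    | .inr p, .inr q => LayRel p q
  symm := ⟨by
    rintro (x | p) (y | q) h
    · exact SimpleGraph.Adj.symm h
    · exact h
    · exact h
    · exact ⟨h.1.symm, h.2.2, h.2.1⟩⟩
  loopless := ⟨by
    rintro (x | p) h
    · exact G.irrefl h
    · have := h.1
      omega⟩

lemma extRel_unique {V : Type*} [Encodable V] {K : V → Fin 2 → ℕ∞} {x y : V} {q : ℕ × ℕ}
    (hx : ExtRel K x q) (hy : ExtRel K y q) : x = y := by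
  obtain ⟨c, k, -, h⟩ := hx
  obtain ⟨c', k', -, h'⟩ := hy
  rw [h, Prod.mk.injEq] at h'
  have : Encodable.encode (x, k) = Encodable.encode (y, k') := by omega
  exact (Prod.mk.injEq _ _ _ _ ▸ Encodable.encode_injective this).1

/-- A layer of the gadget. -/
def lay (V : Type u) (m : ℕ) : Finset (V ⊕ (ℕ × ℕ)) :=
  (Finset.range (5 * m / 2)).map
    ⟨fun i => .inr (m, i), fun i j h => by simpa using h⟩

lemma mem_lay {V : Type u} {m : ℕ} {y : V ⊕ (ℕ × ℕ)} :
    y ∈ lay V m ↔ ∃ i, i < 5 * m / 2 ∧ y = .inr (m, i) := by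
  unfold lay
  rw [Finset.mem_map]
  constructor
  · rintro ⟨i, hi, rfl⟩
    exact ⟨i, Finset.mem_range.1 hi, rfl⟩
  · rintro ⟨i, hi, rfl⟩
    exact ⟨i, Finset.mem_range.2 hi, rfl⟩

lemma auxGraph_nbrs {V : Type u} [Encodable V] [DecidableEq V] (G : SimpleGraph V)
    (K : V → Fin 2 → ℕ∞) (m i : ℕ) (hm : 1 ≤ m) (hi : i < 5 * m / 2) :
    ∃ X : Finset (V ⊕ (ℕ × ℕ)), X.card ≤ 1 ∧ (i ≠ 0 → X = ∅) ∧
      Disjoint (lay V (m - 1) ∪ lay V (m + 1)) X ∧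
      ∀ y, (auxGraph G K).Adj (.inr (m, i)) y ↔ y ∈ (lay V (m - 1) ∪ lay V (m + 1)) ∪ X := by
  have hl : ∀ q, (auxGraph G K).Adj (.inr (m, i)) (.inr q) ↔
      (.inr q : V ⊕ (ℕ × ℕ)) ∈ (lay V (m - 1) ∪ lay V (m + 1)) := by
    rintro ⟨a, b⟩
    simp only [auxGraph, LayRel, Finset.mem_union, mem_lay, Sum.inr.injEq, Prod.mk.injEq]
    constructor
    · rintro ⟨h1 | h1, h2, h3⟩
      · exact Or.inl ⟨b, by subst h1; simpa using h3, by omega, rfl⟩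
      · exact Or.inr ⟨b, by subst h1; simpa using h3, by omega, rfl⟩
    · rintro (⟨b', h1, rfl, rfl⟩ | ⟨b', h1, rfl, rfl⟩)
      · exact ⟨Or.inl (by omega), hi, h1⟩
      · exact ⟨Or.inr (by omega), hi, h1⟩
  have hn : ∀ x, (.inl x : V ⊕ (ℕ × ℕ)) ∉ (lay V (m - 1) ∪ lay V (m + 1)) := by
    intro x
    simp [mem_lay]
  by_cases hx : ∃ x, ExtRel K x (m, i)
  · obtain ⟨x, hx⟩ := hx
    refine ⟨{.inl x}, by simp, ?_, by simpa using hn x, ?_⟩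
    · obtain ⟨c, k, -, h⟩ := hx
      intro hi0
      exact absurd (Prod.mk.injEq _ _ _ _ ▸ h).2 hi0
    · rintro (y | q)
      · rw [Finset.mem_union, Finset.mem_singleton]
        simp only [hn y, false_or, Sum.inl.injEq]
        exact ⟨fun h => extRel_unique (q := (m, i)) h hx, fun h => h ▸ hx⟩
      · rw [hl, Finset.mem_union]
        simp
  · refine ⟨∅, by simp, fun _ => rfl, by simp, ?_⟩
    rintro (y | q)
    · rw [Finset.union_empty]
      exact ⟨fun h => absurd ⟨y, h⟩ hx, fun h => absurd h (hn y)⟩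
    · rw [hl, Finset.union_empty]

lemma auxGraph_finite {V : Type u} [Encodable V] (G : SimpleGraph V)
    (K : V → Fin 2 → ℕ∞) (q : ℕ × ℕ) : ((auxGraph G K).neighborSet (.inr q)).Finite := by
  classical
  obtain ⟨m, i⟩ := q
  by_cases hmi : 1 ≤ m ∧ i < 5 * m / 2
  · obtain ⟨X, -, -, -, h⟩ := auxGraph_nbrs G K m i hmi.1 hmi.2
    refine (Finset.finite_toSet ((lay V (m - 1) ∪ lay V (m + 1)) ∪ X)).subset ?_
    intro y hy
    exact (h y).1 hy
  · have : (auxGraph G K).neighborSet (.inr (m, i)) = ∅ := by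
      ext y
      simp only [SimpleGraph.mem_neighborSet, Set.mem_empty_iff_false, iff_false]
      intro h
      apply hmi
      rcases y with y | q
      · obtain ⟨c, k, -, h⟩ : ExtRel K y (m, i) := h
        rw [Prod.mk.injEq] at h
        omega
      · have h' : LayRel (m, i) q := h
        have := h'.2.1
        simp only at this
        omega
    rw [this]
    exact Set.finite_empty

lemma fin2_val_add (c : Fin 2) : (c = 0 ∧ c.val = 0) ∨ (c = 1 ∧ c.val = 1) := by
  revert c; decide

lemma gadget {V : Type u} [Countable V] (G : SimpleGraph V) (K : V → Fin 2 → ℕ∞)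
    (hG : ∀ W : Set V, (∀ x ∈ W, (G.neighborSet x ∩ W).Infinite) → W = ∅)
    (h : ∀ (U : Type u) (H : SimpleGraph U), Countable U →
      (∀ W : Set U, (∀ x ∈ W, (H.neighborSet x ∩ W).Infinite) → W = ∅) →
      ∃ π : U → Fin 2, UnfriendlyPartition H π) :
    ∃ π, GoodP G K π := by
  classical
  obtain ⟨_⟩ := nonempty_encodable V
  obtain ⟨π, hπ⟩ := h _ (auxGraph G K) inferInstance (by
    intro W hW
    have hr : ∀ q, (.inr q : V ⊕ (ℕ × ℕ)) ∉ W := fun q hq =>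
      hW _ hq ((auxGraph_finite G K q).inter_of_left W)
    have h0 : Sum.inl ⁻¹' W = (∅ : Set V) := by
      apply hG
      intro x hx
      have := hW _ hx
      refine Set.Infinite.of_image Sum.inl (this.mono ?_)
      rintro (y | q) ⟨hy1, hy2⟩
      · exact ⟨y, ⟨hy1, hy2⟩, rfl⟩
      · exact absurd hy2 (hr q)
    ext y
    simp only [Set.mem_empty_iff_false, iff_false]
    intro hy
    rcases y with y | q
    · have : y ∈ Sum.inl ⁻¹' W := hy
      rw [h0] at this
      exact this
    · exact hr q hy)
  have hN := unfriendly_nbc _ _ hπ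
  have hstep := layers (fun m i => sg (π (.inr (m, i)))) (fun m i => sg_cases _)
    (fun m => ∑ y ∈ lay V m, sg (π y)) (fun m => Finset.sum_map _ _ _) (by
      intro m i hm hi
      obtain ⟨X, hX1, hX2, hX3, hX4⟩ := auxGraph_nbrs G K m i hm hi
      have hs := sum_sg _ π _ _ hX4 (hN _)
      rw [Finset.sum_union hX3, Finset.sum_union] at hs
      · refine ⟨_, ?_, ?_, ?_, hs⟩
        · rcases Finset.card_le_one_iff_subset_singleton.1 hX1 with ⟨z, hz⟩
          rcases Finset.subset_singleton_iff.1 hz with hz | hz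
          · simp [hz]
          · rw [hz, Finset.sum_singleton]
            rcases sg_cases (π z) with e | e <;> rw [e] <;> norm_num
        · rcases Finset.card_le_one_iff_subset_singleton.1 hX1 with ⟨z, hz⟩
          rcases Finset.subset_singleton_iff.1 hz with hz | hz
          · simp [hz]
          · rw [hz, Finset.sum_singleton]
            rcases sg_cases (π z) with e | e <;> rw [e] <;> norm_num
        · intro hi0
          rw [hX2 hi0, Finset.sum_empty]
      · rw [Finset.disjoint_left]
        intro y hy1 hy2
        rw [mem_lay] at hy1 hy2
        obtain ⟨a, -, rfl⟩ := hy1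
        obtain ⟨b, -, hb⟩ := hy2
        rw [Sum.inr.injEq, Prod.mk.injEq] at hb
        omega)
  obtain ⟨a, ha⟩ : ∃ a, π (.inr (1, 0)) = a := ⟨_, rfl⟩
  have hcol : ∀ e, π (.inr (2 * e + 1, 0)) = a ∧ π (.inr (2 * e + 2, 0)) = a + 1 := by
    intro e
    induction e with
    | zero => exact ⟨ha, by rw [← ha]; exact sg_neg (hstep 1 le_rfl)⟩
    | succ e ih =>
      have h1 : π (.inr (2 * (e + 1) + 1, 0)) = a := by
        have := sg_neg (hstep (2 * e + 2) (by omega))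
        rw [ih.2] at this
        refine this.trans ?_
        generalize a = b
        revert b; decide
      refine ⟨h1, ?_⟩
      rw [← h1]
      exact sg_neg (hstep (2 * (e + 1) + 1) (by omega))
  have hcol' : ∀ e (c : Fin 2), π (.inr (2 * e + c.val + 1, 0)) = a + c := by
    intro e c
    rcases fin2_val_add c with ⟨h1, h2⟩ | ⟨h1, h2⟩
    · rw [h2, h1, add_zero, add_zero]; exact (hcol e).1
    · rw [h2, h1]; exact (hcol e).2
  have haa : ∀ c : Fin 2, c + a + a = c := by
    intro c; generalize a = b; revert b c; decide
  have hcount : ∀ x c, nbc (auxGraph G K) π (.inl x) (c + a) =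
      K x c + nbc G (fun v => π (.inl v) + a) x c := by
    intro x c
    unfold nbc
    rw [add_comm (K x c), ← encard_lt (K x c),
      ← (Sum.inl_injective (α := V) (β := ℕ × ℕ)).encard_image,
      ← Function.Injective.encard_image (f := fun k : ℕ =>
        (.inr (2 * Encodable.encode (x, k) + c.val + 1, 0) : V ⊕ (ℕ × ℕ))),
      ← Set.encard_union_eq]
    · congr 1
      ext y
      rcases y with y | q
      · have hb : π (.inl y) = c + a ↔ π (.inl y) + a = c := by
          generalize π (.inl y) = b
          generalize a = a
          revert a b c; decide
        constructor
        · rintro ⟨h1, h2⟩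
          exact Or.inl ⟨y, ⟨h1, hb.1 h2⟩, rfl⟩
        · rintro (⟨y', ⟨h1, h2⟩, h3⟩ | ⟨k, -, hk⟩)
          · obtain rfl := Sum.inl_injective h3
            exact ⟨h1, hb.2 h2⟩
          · simp at hk
      · constructor
        · rintro ⟨⟨c', k, hk, rfl⟩, h2⟩
          rw [hcol', add_comm a, add_left_inj] at h2
          subst h2
          exact Or.inr ⟨k, hk, rfl⟩
        · rintro (⟨y', -, h3⟩ | ⟨k, hk, h3⟩)
          · simp at h3
          · obtain rfl := Sum.inr_injective h3
            exact ⟨⟨c, k, hk, rfl⟩, by rw [hcol', add_comm]⟩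
    · rw [Set.disjoint_left]
      rintro _ ⟨y, -, rfl⟩ ⟨k, -, hk⟩
      simp at hk
    · intro k k' hk
      simp only [Sum.inr.injEq, Prod.mk.injEq, and_true] at hk
      have : Encodable.encode (x, k) = Encodable.encode (x, k') := by omega
      simpa using Encodable.encode_injective this
  refine ⟨fun v => π (.inl v) + a, fun x => ?_⟩
  have hx := hN (.inl x)
  rw [← hcount, ← hcount]
  rw [haa, add_right_comm (π (.inl x)) a 1, haa]
  exact hx

theorem stmt4 : List.TFAE
    [ -- (1) every graph with conditions has an ω-unfriendly partition
      ∀ (V : Type u) (G : SimpleGraph V) (C : V → Cardinal.{u} × Cardinal.{u}),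
        ∃ π : V → Fin 2, CondMuUnfriendly G C ℵ₀ π,
      -- (2) every graph has an ω-unfriendly partition
      ∀ (V : Type u) (G : SimpleGraph V),
        ∃ π : V → Fin 2, KUnfriendlyPartition G ℵ₀ π,
      -- (3) every countable graph has an unfriendly partition
      ∀ (V : Type u) (G : SimpleGraph V), Countable V →
        ∃ π : V → Fin 2, UnfriendlyPartition G π,
      -- (4) every countable graph with no nonempty induced subgraph of infinite
      -- minimum degree has an unfriendly partition
      ∀ (V : Type u) (G : SimpleGraph V), Countable V →
        (∀ W : Set V, (∀ x ∈ W, (G.neighborSet x ∩ W).Infinite) → W = ∅) →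
        ∃ π : V → Fin 2, UnfriendlyPartition G π ] := by
  tfae_have 1 → 2 := by
    intro h V G
    obtain ⟨π, hπ⟩ := h V G (fun _ => (0, 0))
    refine ⟨π, fun x => ?_⟩
    have hx := hπ x
    simp only [zero_add] at hx
    simp only [fin2_ne]
    rcases (by generalize π x = c; revert c; decide : π x = 0 ∨ π x = 1) with h0 | h0
    · rw [h0]
      exact (hx.1 h0).elim Or.inr fun h => Or.inl h.2
    · rw [h0]
      exact (hx.2 h0).elim Or.inr fun h => Or.inl h.1
  tfae_have 2 → 3 := by
    intro h V G hV
    obtain ⟨π, hπ⟩ := h V G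
    refine ⟨π, fun x => ?_⟩
    rcases hπ x with hx | hx
    · exact (Cardinal.mk_le_aleph0).trans hx
    · exact hx
  tfae_have 3 → 4 := fun h V G hV _ => h V G hV
  tfae_have 4 → 1 := by
    intro h V G C
    obtain ⟨π, hπ⟩ := block_reduction G
      (fun x c => if c = 0 then toENat (C x).1 else toENat (C x).2)
      (fun U H K _ => countable_reduction H K fun U' H' K' _ hW' => gadget H' K' hW' h)
    exact ⟨π, cond_of_good G C π hπ⟩
  tfae_finish
end

section
/- For every graph G=(V,E) there exists a unique partition of V into three pairwise disjoint sets V = V¹ ∪ V² ∪ 𝓘(G) such that each element of V¹ has only finitely many neighbours in V¹ and each element of V² has infinitely many neighbours in V¹. -/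
universe u

/-- Transfinite peeling of vertices. -/
noncomputable def peelStage {V : Type u} (G : SimpleGraph V) : Ordinal.{u} → Set V :=
  WellFounded.fix (C := fun _ => Set V) (wellFounded_lt (α := Ordinal.{u}))
    (fun a ih => {x | {y | y ∈ G.neighborSet x ∧ ¬ ∃ b, ∃ h : b < a, y ∈ ih b h}.Finite})

theorem mem_peelStage {V : Type u} (G : SimpleGraph V) (a : Ordinal.{u}) (x : V) :
    x ∈ peelStage G a ↔
      {y | y ∈ G.neighborSet x ∧ ¬ ∃ b, ∃ _ : b < a, y ∈ peelStage G b}.Finite := by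
  have h : peelStage G a =
      {x | {y | y ∈ G.neighborSet x ∧ ¬ ∃ b, ∃ _ : b < a, y ∈ peelStage G b}.Finite} := by
    unfold peelStage
    rw [WellFounded.fix_eq]
  rw [h]; rfl

theorem exists_peel_rank {V : Type u} (G : SimpleGraph V) :
    ∃ rk : V → Ordinal.{u}, ∀ x, x ∉ calI G →
      {y | y ∈ G.neighborSet x ∧ y ∉ calI G ∧ rk x ≤ rk y}.Finite := by
  classical
  let rk : V → Ordinal.{u} := fun x => sInf {a | x ∈ peelStage G a}
  have hrk : ∀ x a, x ∈ peelStage G a → x ∈ peelStage G (rk x) := fun x a h =>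
    csInf_mem (s := {a | x ∈ peelStage G a}) ⟨a, h⟩
  have hS : ∀ x, x ∉ calI G → ∃ a, x ∈ peelStage G a := by
    intro x hx
    by_contra hn
    refine hx ⟨{z | ¬ ∃ a, z ∈ peelStage G a}, ?_, hn⟩
    intro z hz hfin
    apply hz
    obtain ⟨c, hc⟩ := Ordinal.bddAbove_of_small (s := Set.range rk)
    refine ⟨Order.succ c, (mem_peelStage G _ _).2 (hfin.subset ?_)⟩
    rintro y ⟨hy, hy'⟩
    refine ⟨hy, ?_⟩
    rintro ⟨a, ha⟩
    exact hy' ⟨rk y, Order.lt_succ_of_le (hc ⟨y, rfl⟩), hrk y a ha⟩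
  refine ⟨rk, fun x hx => ?_⟩
  obtain ⟨a, ha⟩ := hS x hx
  refine ((mem_peelStage G _ _).1 (hrk x a ha)).subset ?_
  rintro y ⟨hy, _, hle⟩
  refine ⟨hy, ?_⟩
  rintro ⟨b, hb, hyb⟩
  exact absurd (csInf_le' (s := {a | y ∈ peelStage G a}) hyb) (not_le.2 (hb.trans_le hle))

theorem exists_peel_set {V : Type u} (G : SimpleGraph V) (rk : V → Ordinal.{u}) :
    ∃ A : Set V, ∀ x, x ∈ A ↔
      x ∉ calI G ∧ {y | y ∈ G.neighborSet x ∧ rk y < rk x ∧ y ∈ A}.Finite := by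
  let wf : WellFounded (fun y x : V => rk y < rk x) := InvImage.wf rk wellFounded_lt
  let P : V → Prop := wf.fix (C := fun _ => Prop) (fun x ih =>
    x ∉ calI G ∧ {y | y ∈ G.neighborSet x ∧ ∃ h : rk y < rk x, ih y h}.Finite)
  refine ⟨{x | P x}, fun x => ?_⟩
  have h : P x = (x ∉ calI G ∧ {y | y ∈ G.neighborSet x ∧ ∃ _ : rk y < rk x, P y}.Finite) := by
    simp only [P]
    rw [WellFounded.fix_eq]
  simp only [Set.mem_setOf_eq]
  conv_lhs => rw [h]
  simp only [exists_prop]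

theorem stmt5 {V : Type u} (G : SimpleGraph V) :
    ∃! p : Set V × Set V,
      p.1 ∪ p.2 ∪ calI G = Set.univ ∧
      Disjoint p.1 p.2 ∧ Disjoint p.1 (calI G) ∧ Disjoint p.2 (calI G) ∧
      (∀ x ∈ p.1, (G.neighborSet x ∩ p.1).Finite) ∧
      (∀ x ∈ p.2, (G.neighborSet x ∩ p.1).Infinite) := by
  classical
  obtain ⟨rk, hrk⟩ := exists_peel_rank G
  obtain ⟨A, hA⟩ := exists_peel_set G rk
  -- finiteness only depends on lower rank
  have key : ∀ B : Set V, (∀ x ∈ B, x ∉ calI G) → ∀ x, x ∉ calI G →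
      ((G.neighborSet x ∩ B).Finite ↔
        {y | y ∈ G.neighborSet x ∧ rk y < rk x ∧ y ∈ B}.Finite) := by
    intro B hB x hx
    constructor
    · intro h
      exact h.subset fun y hy => ⟨hy.1, hy.2.2⟩
    · intro h
      refine (h.union (hrk x hx)).subset ?_
      rintro y ⟨hy, hyB⟩
      rcases lt_or_ge (rk y) (rk x) with hl | hl
      · exact Or.inl ⟨hy, hl, hyB⟩
      · exact Or.inr ⟨hy, hB y hyB, hl⟩
  have hAI : ∀ x ∈ A, x ∉ calI G := fun x hx => ((hA x).1 hx).1
  refine ⟨(A, {x | x ∉ A ∧ x ∉ calI G}), ⟨?_, ?_, ?_, ?_, ?_, ?_⟩, ?_⟩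
  · ext x
    simp only [Set.mem_union, Set.mem_setOf_eq, Set.mem_univ, iff_true]
    tauto
  · exact Set.disjoint_left.2 fun x hx hx' => hx'.1 hx
  · exact Set.disjoint_left.2 hAI
  · exact Set.disjoint_left.2 fun x hx => hx.2
  · intro x hx
    exact (key A hAI x (hAI x hx)).2 ((hA x).1 hx).2
  · rintro x ⟨hx, hxI⟩ hfin
    exact hx ((hA x).2 ⟨hxI, (key A hAI x hxI).1 hfin⟩)
  · rintro ⟨B, C⟩ ⟨hu, hBC, hBI, hCI, hB, hC⟩
    simp only at hu hBC hBI hCI hB hC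
    have hBI' := Set.disjoint_left.1 hBI
    have hcov : ∀ x, x ∉ calI G → x ∉ B → x ∈ C := by
      intro x h1 h2
      have : x ∈ B ∪ C ∪ calI G := hu ▸ Set.mem_univ x
      rcases this with (h | h) | h
      · exact absurd h h2
      · exact h
      · exact absurd h h1
    have hB' : ∀ x, x ∈ B ↔ x ∉ calI G ∧
        {y | y ∈ G.neighborSet x ∧ rk y < rk x ∧ y ∈ B}.Finite := by
      intro x
      constructor
      · intro hx
        exact ⟨hBI' hx, (key B (fun _ h => hBI' h) x (hBI' hx)).1 (hB x hx)⟩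
      · rintro ⟨hx, hf⟩
        by_contra hn
        exact hC x (hcov x hx hn) ((key B (fun _ h => hBI' h) x hx).2 hf)
    have hall : ∀ x, x ∈ B ↔ x ∈ A := by
      intro x
      induction x using (InvImage.wf rk (wellFounded_lt (α := Ordinal.{u}))).induction with
      | _ x ih =>
        rw [hB', hA]
        have : {y | y ∈ G.neighborSet x ∧ rk y < rk x ∧ y ∈ B} =
            {y | y ∈ G.neighborSet x ∧ rk y < rk x ∧ y ∈ A} := by
          ext y
          constructor
          · rintro ⟨a, b, c⟩
            exact ⟨a, b, (ih y b).1 c⟩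
          · rintro ⟨a, b, c⟩
            exact ⟨a, b, (ih y b).2 c⟩
        rw [this]
    have e1 : B = A := Set.ext hall
    subst e1
    refine Prod.ext rfl (Set.ext fun x => ?_)
    constructor
    · intro hx
      exact ⟨fun h => Set.disjoint_left.1 hBC h hx, Set.disjoint_left.1 hCI hx⟩
    · rintro ⟨h1, h2⟩
      exact hcov x h2 h1
end

section
/- Let κ be an infinite cardinal and G=(V,E) a graph. Let 𝓔 be the set of pairs (W,π) with W ⊆ V and π : W → {0,1} such that each element of W has at least κ neighbours in W or at least as many neighbours in W as in V−W, and π is a κ-unfriendly partition of the induced subgraph on W. Then for any ordinal μ and any increasing chain (W_α, π_α)_{α<μ} of elements of 𝓔 (meaning W_α ⊆ W_β and π_β restricted to W_α equals π_α for α ≤ β < μ), the pair (∪_{α<μ} W_α, ∪_{α<μ} π_α) belongs to 𝓔. -/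
open Cardinal

universe u

/-- `(W, π)` belongs to the set `𝓔`: each element of `W` has at least `κ` neighbours in `W` or
at least as many neighbours in `W` as in `V − W`, and `π` is a `κ`-unfriendly partition of the
induced subgraph on `W`. -/
def InE {V : Type u} (G : SimpleGraph V) (κ : Cardinal.{u}) (W : Set V) (π : ↥W → Fin 2) :
    Prop :=
  (∀ x ∈ W, κ ≤ #↥(G.neighborSet x ∩ W) ∨
    #↥(G.neighborSet x ∩ Wᶜ) ≤ #↥(G.neighborSet x ∩ W)) ∧
  KUnfriendlyPartition (G.induce W) κ π

/-- Reformulation of the partition property for the restriction of a globally defined map. -/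
lemma kunf_iff {V : Type u} (G : SimpleGraph V) (κ : Cardinal.{u}) (p : V → Fin 2) (S : Set V) :
    KUnfriendlyPartition (G.induce S) κ (fun y => p y) ↔
      ∀ x ∈ S, κ ≤ #↥{y | y ∈ S ∧ G.Adj x y ∧ p y ≠ p x} ∨
        #↥{y | y ∈ S ∧ G.Adj x y ∧ p y = p x} ≤ #↥{y | y ∈ S ∧ G.Adj x y ∧ p y ≠ p x} := by
  have key : ∀ (x : S) (q : V → Prop),
      #{y : S // (G.induce S).Adj x y ∧ q y} = #↥{y | y ∈ S ∧ G.Adj x y ∧ q y} := by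
    intro x q
    exact Cardinal.mk_congr
      (Equiv.subtypeSubtypeEquivSubtypeInter (fun y => y ∈ S) (fun y => G.Adj x y ∧ q y))
  unfold KUnfriendlyPartition
  constructor
  · intro h x hx
    have := h ⟨x, hx⟩
    rw [key ⟨x, hx⟩ (fun y => p y ≠ p x), key ⟨x, hx⟩ (fun y => p y = p x)] at this
    exact this
  · intro h x
    rw [key x (fun y => p y ≠ p x), key x (fun y => p y = p x)]
    exact h x x.2

lemma aux {V : Type u} (G : SimpleGraph V) (κ : Cardinal.{u}) (hκ : ℵ₀ ≤ κ)
    {ι : Type*} [LinearOrder ι] (W : ι → Set V) (hW : Monotone W) (p : V → Fin 2)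
    (hE : ∀ i, InE G κ (W i) (fun y => p y)) :
    InE G κ (⋃ i, W i) (fun y => p y) := by
  have hsub : ∀ i, W i ⊆ ⋃ i, W i := fun i => Set.subset_iUnion W i
  refine ⟨?_, ?_⟩
  · intro x hx
    obtain ⟨i, hi⟩ := Set.mem_iUnion.1 hx
    have hle : #↥(G.neighborSet x ∩ W i) ≤ #↥(G.neighborSet x ∩ ⋃ i, W i) :=
      Cardinal.mk_le_mk_of_subset (Set.inter_subset_inter_right _ (hsub i))
    rcases (hE i).1 x hi with h | h
    · exact Or.inl (h.trans hle)
    · refine Or.inr (le_trans (Cardinal.mk_le_mk_of_subset ?_) (h.trans hle))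
      exact Set.inter_subset_inter_right _ (Set.compl_subset_compl.2 (hsub i))
  · rw [kunf_iff]
    intro x hx
    obtain ⟨i, hi⟩ := Set.mem_iUnion.1 hx
    have hU := fun j => (kunf_iff G κ p (W j)).1 (hE j).2
    have hBle : ∀ j, #↥{y | y ∈ W j ∧ G.Adj x y ∧ p y ≠ p x} ≤
        #↥{y | y ∈ ⋃ i, W i ∧ G.Adj x y ∧ p y ≠ p x} := fun j =>
      Cardinal.mk_le_mk_of_subset (fun y hy => ⟨hsub j hy.1, hy.2⟩)
    by_cases hκB : κ ≤ #↥{y | y ∈ ⋃ i, W i ∧ G.Adj x y ∧ p y ≠ p x}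
    · exact Or.inl hκB
    right
    have hAB : ∀ j, x ∈ W j → #↥{y | y ∈ W j ∧ G.Adj x y ∧ p y = p x} ≤
        #↥{y | y ∈ W j ∧ G.Adj x y ∧ p y ≠ p x} := fun j hj =>
      (hU j x hj).resolve_left (fun h => hκB (h.trans (hBle j)))
    set A := {y | y ∈ W i ∧ G.Adj x y ∧ p y = p x} with hA
    set B := {y | y ∈ W i ∧ G.Adj x y ∧ p y ≠ p x} with hB
    have hN : G.neighborSet x ∩ W i = A ∪ B := by
      ext y
      simp only [hA, hB, Set.mem_inter_iff, SimpleGraph.mem_neighborSet, Set.mem_union,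
        Set.mem_setOf_eq]
      tauto
    have hNle : #↥(G.neighborSet x ∩ W i) ≤ #↥B + #↥B := by
      rw [hN]
      exact (Cardinal.mk_union_le _ _).trans (add_le_add_left (hAB i hi) _)
    have hBκ : #↥B < κ := lt_of_not_ge (fun h => hκB (h.trans (hBle i)))
    have hNκ : #↥(G.neighborSet x ∩ W i) < κ :=
      hNle.trans_lt (Cardinal.add_lt_of_lt hκ hBκ hBκ)
    have hout := ((hE i).1 x hi).resolve_left (not_le.2 hNκ)
    have hall : #↥(G.neighborSet x) ≤ (#↥B + #↥B) + (#↥B + #↥B) := by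
      rw [← Set.inter_union_compl (G.neighborSet x) (W i)]
      exact (Cardinal.mk_union_le _ _).trans (add_le_add hNle (hout.trans hNle))
    have hAsub : {y | y ∈ ⋃ i, W i ∧ G.Adj x y ∧ p y = p x} ⊆ G.neighborSet x :=
      fun y hy => hy.2.1
    rcases le_or_gt ℵ₀ #↥B with hinf | hfin
    · rw [Cardinal.add_eq_self hinf, Cardinal.add_eq_self hinf] at hall
      exact ((Cardinal.mk_le_mk_of_subset hAsub).trans hall).trans (hBle i)
    · have hNfin : (G.neighborSet x).Finite := by
        rw [← Cardinal.lt_aleph0_iff_set_finite]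
        have h2 := Cardinal.add_lt_aleph0 hfin hfin
        exact hall.trans_lt (Cardinal.add_lt_aleph0 h2 h2)
      have hf : ∀ y : V, ∃ j, y ∈ (⋃ i, W i) → y ∈ W j := by
        intro y
        by_cases hy : y ∈ ⋃ i, W i
        · obtain ⟨j, hj⟩ := Set.mem_iUnion.1 hy
          exact ⟨j, fun _ => hj⟩
        · exact ⟨i, fun h => absurd h hy⟩
      choose f hf using hf
      haveI : Nonempty ι := ⟨i⟩
      obtain ⟨j, hj⟩ := (hNfin.image f).bddAbove
      have hxk : x ∈ W (max i j) := hW (le_max_left _ _) hi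
      refine le_trans (Cardinal.mk_le_mk_of_subset ?_) ((hAB _ hxk).trans (hBle (max i j)))
      intro y hy
      exact ⟨hW ((hj ⟨y, hAsub hy, rfl⟩).trans (le_max_right _ _)) (hf y hy.1), hy.2⟩

theorem stmt7 {V : Type u} (G : SimpleGraph V) (κ : Cardinal.{u}) (hκ : ℵ₀ ≤ κ)
    (μ : Ordinal.{u}) (W : ∀ α : Ordinal.{u}, α < μ → Set V)
    (π : ∀ (α : Ordinal.{u}) (hα : α < μ), ↥(W α hα) → Fin 2)
    (hmono : ∀ (α : Ordinal.{u}) (hα : α < μ) (β : Ordinal.{u}) (hβ : β < μ),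
      α ≤ β → W α hα ⊆ W β hβ)
    (hcompat : ∀ (α : Ordinal.{u}) (hα : α < μ) (β : Ordinal.{u}) (hβ : β < μ), α ≤ β →
      ∀ (x : V) (hxα : x ∈ W α hα) (hxβ : x ∈ W β hβ), π β hβ ⟨x, hxβ⟩ = π α hα ⟨x, hxα⟩)
    (hE : ∀ (α : Ordinal.{u}) (hα : α < μ), InE G κ (W α hα) (π α hα))
    (π' : ↥(⋃ (α : Ordinal.{u}) (hα : α < μ), W α hα) → Fin 2)
    (hπ' : ∀ (α : Ordinal.{u}) (hα : α < μ)
      (y : ↥(⋃ (α : Ordinal.{u}) (hα : α < μ), W α hα)) (hy : ↑y ∈ W α hα),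
      π' y = π α hα ⟨y, hy⟩) :
    InE G κ (⋃ (α : Ordinal.{u}) (hα : α < μ), W α hα) π' := by
  classical
  let p : V → Fin 2 := fun y =>
    if h : y ∈ ⋃ (α : Ordinal.{u}) (hα : α < μ), W α hα then π' ⟨y, h⟩ else 0
  have hp : π' = fun y => p y.1 := by
    funext y
    simp only [p]
    rw [dif_pos y.2]
  have hset : (⋃ (α : Ordinal.{u}) (hα : α < μ), W α hα) = ⋃ i : Set.Iio μ, W i.1 i.2 := by
    ext y
    simp
  have hpi : ∀ i : Set.Iio μ, π i.1 i.2 = fun y => p y.1 := by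
    intro i
    funext y
    have hy : (y : V) ∈ ⋃ (α : Ordinal.{u}) (hα : α < μ), W α hα :=
      Set.mem_iUnion₂.2 ⟨i.1, i.2, y.2⟩
    simp only [p]
    rw [dif_pos hy, hπ' i.1 i.2 ⟨y, hy⟩ y.2]
  have main := aux G κ hκ (fun i : Set.Iio μ => W i.1 i.2)
    (fun i j hij => hmono i.1 i.2 j.1 j.2 hij) p
    (fun i => by have := hE i.1 i.2; rw [hpi i] at this; exact this)
  rw [hp]
  clear_value p
  clear hp hπ' 
  rw [hset]
  exact main
end
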